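/- arXiv:2512.10928 — 8 statements merged into one kernel-verified Lean document; each statement's English description precedes it below -/
import Mathlib

section
/- Let n ≥ 1, let g ∈ ℂ[x,y,z] be homogeneous of degree n, and let a, c ∈ ℂ be such that (a·x + y)·∂x g + a·y·∂y g + c·z·∂z g = 0. Then one of the following holds: (i) g = 0; (ii) g is a scalar multiple of a monomial y^j z^k with j + k = n (so its zero locus is a union of at most two lines through a point); (iii) a = 0, c = 0 and ∂x g = 0, so that the three partial derivatives of g are linearly dependent over ℂ and the zero locus of g is a union of concurrent lines. -/
open MvPolynomial

/-!
The operator in the hypothesis is `D = E + y ∂x`, where `E = a (x ∂x + y ∂y) + c z ∂z` is diagonal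
on monomials, with eigenvalue `a (i + j) + c k` on `x^i y^j z^k`, and `y ∂x` is nilpotent and
commutes with `E`. Hence `D g = 0` forces both `E g = 0` and `∂x g = 0`. In coefficients: if the
eigenvalue attached to a power `z^k` is nonzero, all coefficients of `g` along `z^k` vanish by
induction on the exponent of `y`; if it is zero, every coefficient at a monomial divisible by `x`
vanishes (`exponents_of_coeff_ne_zero`). So `g` is a combination of monomials `y^j z^k` with
`j + k = n` and `a j + c k = 0`. Either only one such monomial occurs, or two of them do; in the
latter case the two linear equations are independent, so `a = c = 0`.
-/

/-- Multiplication by `xₗ` followed by taking the coefficient, on a partial derivative: the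
coefficient of `xₗ ∂ₚ g` at `m + eₗ` is `(m p + 1)` times that of `g` at `m + eₚ`. -/
lemma coeff_X_mul_pderiv_add (g : MvPolynomial (Fin 3) ℂ) (l p : Fin 3) (m : Fin 3 →₀ ℕ) :
    coeff (m + Finsupp.single l 1) (X l * pderiv p g) =
      ((m p : ℂ) + 1) * coeff (m + Finsupp.single p 1) g := by
  rw [add_comm m, coeff_X_mul, coeff_pderiv, mul_comm]

/-- The Euler operator `xₗ ∂ₗ` is diagonal on monomials. -/
lemma coeff_X_mul_pderiv_self (g : MvPolynomial (Fin 3) ℂ) (l : Fin 3) (m : Fin 3 →₀ ℕ) :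
    coeff m (X l * pderiv l g) = (m l : ℂ) * coeff m g := by
  by_cases h : m l = 0
  · simp [coeff_X_mul', h]
  · have hm : m = (m - Finsupp.single l 1) + Finsupp.single l 1 := by
      rw [tsub_add_cancel_of_le]
      simpa [Nat.one_le_iff_ne_zero] using h
    generalize m - Finsupp.single l 1 = m' at hm
    subst hm
    rw [coeff_X_mul_pderiv_add]
    simp

/-- The monomials of a solution do not involve `x` and have eigenvalue `0`. -/
lemma exponents_of_coeff_ne_zero (n : ℕ) (g : MvPolynomial (Fin 3) ℂ)
    (hg : g.IsHomogeneous n) (a c : ℂ)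
    (hsyz : (C a * X 0 + X 1) * pderiv 0 g + C a * X 1 * pderiv 1 g +
      C c * X 2 * pderiv 2 g = 0) (m : Fin 3 →₀ ℕ) (hm : coeff m g ≠ 0) :
    m 0 = 0 ∧ m 1 + m 2 = n ∧ a * m 1 + c * m 2 = 0 := by
  have hdeg : ∀ m : Fin 3 →₀ ℕ, coeff m g ≠ 0 → m 0 + m 1 + m 2 = n := by
    intro m hm
    have h := hg hm
    rw [Finsupp.weight_apply, Finsupp.sum_fintype _ _ (by simp)] at h
    simpa [Fin.sum_univ_three] using h
  have hD : ∀ m, (a * (m 0 + m 1) + c * m 2) * coeff m g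
      + coeff m (X 1 * pderiv 0 g) = 0 := by
    intro m
    have h := congrArg (coeff m) hsyz
    have e : (C a * X 0 + X 1) * pderiv 0 g + C a * X 1 * pderiv 1 g + C c * X 2 * pderiv 2 g
        = C a * (X 0 * pderiv 0 g) + C a * (X 1 * pderiv 1 g) + C c * (X 2 * pderiv 2 g)
          + X 1 * pderiv 0 g := by ring
    rw [e] at h
    simp only [coeff_add, coeff_C_mul, coeff_X_mul_pderiv_self, coeff_zero] at h
    linear_combination h
  -- A nonzero eigenvalue kills the coefficient, by induction on the exponent of `y`; the
  -- eigenvalue is unchanged when `x^i y^(j+1)` is replaced by `x^(i+1) y^j`.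
  have hE : ∀ (j : ℕ) (m : Fin 3 →₀ ℕ), m 1 = j → a * (m 0 + m 1) + c * m 2 ≠ 0 →
      coeff m g = 0 := by
    intro j
    induction j with
    | zero =>
      intro m h1 he
      have h := hD m
      rw [coeff_X_mul', if_neg (by simp [h1]), add_zero] at h
      exact (mul_eq_zero.mp h).resolve_left he
    | succ j ih =>
      intro m h1 he
      obtain ⟨m', rfl⟩ : ∃ m', m = m' + Finsupp.single 1 1 :=
        ⟨m - Finsupp.single 1 1, by
          rw [tsub_add_cancel_of_le]
          simp [h1]⟩
      have h := hD (m' + Finsupp.single 1 1)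
      rw [coeff_X_mul_pderiv_add, ih (m' + Finsupp.single 0 1) (by simpa using h1) ?_,
        mul_zero, add_zero] at h
      · exact (mul_eq_zero.mp h).resolve_left he
      · convert he using 1
        simp
        exact Or.inl (by ring)
  have he : a * (m 0 + m 1) + c * m 2 = 0 := by
    by_contra he
    exact hm (hE _ m rfl he)
  have h0 : m 0 = 0 := by
    by_contra h0
    obtain ⟨m', rfl⟩ : ∃ m', m = m' + Finsupp.single 0 1 :=
      ⟨m - Finsupp.single 0 1, by
        rw [tsub_add_cancel_of_le]
        simpa [Nat.one_le_iff_ne_zero] using h0⟩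
    have h := hD (m' + Finsupp.single 1 1)
    have he' : a * (((m' + Finsupp.single 1 1 : Fin 3 →₀ ℕ) 0 : ℂ) +
        ((m' + Finsupp.single 1 1 : Fin 3 →₀ ℕ) 1 : ℂ)) +
        c * ((m' + Finsupp.single 1 1 : Fin 3 →₀ ℕ) 2 : ℂ) = 0 := by
      rw [← he]
      simp
      exact Or.inl (by ring)
    rw [he', zero_mul, zero_add, coeff_X_mul_pderiv_add] at h
    exact hm ((mul_eq_zero.mp h).resolve_left (Nat.cast_add_one_ne_zero _))
  have hn := hdeg m hm
  refine ⟨h0, by omega, ?_⟩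
  simpa [h0] using he

theorem stmt_3 (n : ℕ) (hn : 1 ≤ n) (g : MvPolynomial (Fin 3) ℂ)
    (hg : g.IsHomogeneous n) (a c : ℂ)
    (hsyz : (C a * X 0 + X 1) * pderiv 0 g + C a * X 1 * pderiv 1 g +
      C c * X 2 * pderiv 2 g = 0) :
    g = 0 ∨
    (∃ (j k : ℕ) (lam : ℂ), j + k = n ∧ g = C lam * X 1 ^ j * X 2 ^ k) ∨
    (a = 0 ∧ c = 0 ∧ pderiv 0 g = 0) := by
  have key := exponents_of_coeff_ne_zero n g hg a c hsyz
  by_cases hg0 : g = 0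
  · exact Or.inl hg0
  right
  obtain ⟨m, hm⟩ := ne_zero_iff.mp hg0
  obtain ⟨h0, h12, he⟩ := key m hm
  by_cases huniq : ∀ m', coeff m' g ≠ 0 → m' = m
  · left
    refine ⟨m 1, m 2, coeff m g, h12, ?_⟩
    have hmon : C (coeff m g) * X 1 ^ m 1 * X 2 ^ m 2 = monomial m (coeff m g) := by
      rw [monomial_eq, Finsupp.prod_fintype _ _ (by simp), Fin.prod_univ_three, h0]
      ring
    rw [hmon]
    ext m'
    rw [coeff_monomial]
    split_ifs with h
    · rw [h]
    · by_contra h'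
      exact h (huniq m' h').symm
  · right
    push Not at huniq
    obtain ⟨m', hm', hne⟩ := huniq
    obtain ⟨h0', h12', he'⟩ := key m' hm'
    have hne2 : m' 2 ≠ m 2 := by
      intro h2
      apply hne
      ext i
      fin_cases i
      · exact h0'.trans h0.symm
      · change m' 1 = m 1
        omega
      · exact h2
    have hd : (m' 2 : ℂ) - m 2 ≠ 0 := sub_ne_zero.mpr (Nat.cast_injective.ne hne2)
    have hs : (m 1 : ℂ) + m 2 = n := by exact_mod_cast h12
    have hs' : (m' 1 : ℂ) + m' 2 = n := by exact_mod_cast h12'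
    have hca : c = a := by
      have : ((m' 2 : ℂ) - m 2) * (c - a) = 0 := by
        linear_combination he' - he - a * hs' + a * hs
      exact sub_eq_zero.mp ((mul_eq_zero.mp this).resolve_left hd)
    have ha : a = 0 := by
      have : a * (n : ℂ) = 0 := by
        rw [hca] at he
        linear_combination he - a * hs
      exact (mul_eq_zero.mp this).resolve_right (Nat.cast_ne_zero.mpr (by omega))
    refine ⟨ha, hca.trans ha, ?_⟩
    ext u
    rw [coeff_pderiv, coeff_zero]
    by_contra h'
    have := (key _ (left_ne_zero_of_mul h')).1
    simp at this
end

section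
/- Let n ≥ 1, let g ∈ ℂ[x,y,z] be homogeneous of degree n, and let a ∈ ℂ with a ≠ 0. If (a·x + y)·∂x g + (a·y + z)·∂y g + a·z·∂z g = 0, then g = 0. -/
/-!
Write the operator as `a • E + N`, where `E` is the Euler operator and `N = y ∂x + z ∂y`.
Euler's identity turns the hypothesis into `(n a) g + N g = 0`. Give the monomial `x^i y^j z^k` the
weight `2 i + j`; then `N` lowers the weight by exactly one. At a monomial of maximal weight in the
support of `g`, the coefficient of `N g` therefore vanishes (`coeff_X_mul_pderiv_eq_zero`), so
`n a` times a nonzero coefficient of `g` is zero, which is impossible.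
-/

open MvPolynomial

/-- If `X s * pderiv t` lowers the weight `2 i + j` by one (that is, `(s, t)` is `(y, x)` or
`(z, y)`), it contributes nothing to the coefficient of a monomial `m` such that no monomial of `g`
has greater weight than `m`. -/
lemma coeff_X_mul_pderiv_eq_zero {g : MvPolynomial (Fin 3) ℂ} {m : Fin 3 →₀ ℕ}
    (hm : ∀ m' ∈ g.support, 2 * m' 0 + m' 1 ≤ 2 * m 0 + m 1) {s t : Fin 3}
    (hst : s = 1 ∧ t = 0 ∨ s = 2 ∧ t = 1) :
    coeff m (X s * pderiv t g) = 0 := by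
  rw [coeff_X_mul']
  split_ifs with h
  · have h0 : m s ≠ 0 := Finsupp.mem_support_iff.mp h
    rw [coeff_pderiv]
    have : coeff (m - Finsupp.single s 1 + Finsupp.single t 1) g = 0 := by
      by_contra hc
      have := hm _ (mem_support_iff.mpr hc)
      rcases hst with ⟨rfl, rfl⟩ | ⟨rfl, rfl⟩ <;>
        simp [Finsupp.single_apply] at this <;> omega
    simp [this]
  · rfl

theorem stmt_4 (n : ℕ) (hn : 1 ≤ n) (g : MvPolynomial (Fin 3) ℂ)
    (hg : g.IsHomogeneous n) (a : ℂ) (ha : a ≠ 0)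
    (hsyz : (C a * X 0 + X 1) * pderiv 0 g + (C a * X 1 + X 2) * pderiv 1 g +
      C a * X 2 * pderiv 2 g = 0) :
    g = 0 := by
  have hE := hg.sum_X_mul_pderiv
  rw [Fin.sum_univ_three, nsmul_eq_mul] at hE
  have key : C (a * n) * g + (X 1 * pderiv 0 g + X 2 * pderiv 1 g) = 0 := by
    rw [C_mul, map_natCast]
    linear_combination hsyz - C a * hE
  by_contra hne
  obtain ⟨m, hmem, hmax⟩ := g.support.exists_max_image (fun m => 2 * m 0 + m 1)
    (support_nonempty.mpr hne)
  have hc := congrArg (coeff m) key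
  rw [coeff_add, coeff_add, coeff_C_mul, coeff_X_mul_pderiv_eq_zero hmax (by simp),
    coeff_X_mul_pderiv_eq_zero hmax (by simp)] at hc
  have hn' : (n : ℂ) ≠ 0 := by exact_mod_cast (by omega : n ≠ 0)
  simp [ha, hn', mem_support_iff.mp hmem] at hc
end

section
/- Let g ∈ ℂ[x,y,z] be a non-zero squarefree homogeneous polynomial of degree n ≥ 3 whose three partial derivatives ∂x g, ∂y g, ∂z g are linearly independent over ℂ, and suppose g admits a linear Jacobian syzygy, i.e., there exist linear forms A, B, C ∈ ℂ[x,y,z], not all zero, with A·∂x g + B·∂y g + C·∂z g = 0. Then there exists an invertible 3×3 complex matrix N such that, writing g∘N for the polynomial obtained from g by substituting each variable by the corresponding linear form determined by N, one of the following holds: (i) there exist a, b, c ∈ ℂ with a ≠ 0 and not a = b = c such that a·x·∂x(g∘N) + b·y·∂y(g∘N) + c·z·∂z(g∘N) = 0; or (ii) y·∂x(g∘N) + z·∂y(g∘N) = 0. -/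
/-!
A linear Jacobian syzygy of `g` says that `g` is killed by the linear vector field
`D_M = ∑ i, (M·X)_i ∂_i` of some non-zero matrix `M`. A linear substitution `P` conjugates `M` to
`P⁻¹ M P` (`linField_substMat`), so the classification reduces to Jordan normal forms.

Let `M = S + N` be the Jordan-Chevalley decomposition. Then `D_S` and `D_N` commute, `D_N` is
locally nilpotent, and `D_S` is diagonalizable, since in an eigenbasis of `S` the monomials are
eigenvectors of `D_S`. From `D_S g = -D_N g` it follows that `D_S ^ k g = 0` for large `k`, hence
`D_S g = 0` and `D_N g = 0` separately (`linField_semisimple_eq_zero`).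

* If `N = 0`, then `M = S` is diagonalizable and non-zero; an eigenbasis whose first eigenvalue is
  non-zero gives case (i). The eigenvalues are not all equal, because by Euler's identity a scalar
  matrix `λ` acts on `g` as multiplication by `λ n`.
* If `N ≠ 0`, then `N² ≠ 0`: otherwise `N` has rank one and `D_N` is the product of a linear form
  and a constant vector field, which would give a linear relation between the partial derivatives
  of `g` (`eq_zero_of_sq_eq_zero`). So `N` is a single nilpotent Jordan block, and `D_N g = 0`
  becomes case (ii) in a Jordan basis (`exists_jordan_block`).
-/

open MvPolynomial

/-- The linear form `(M·X)_i = Σ_j M_{i,j} X_j`. -/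
noncomputable def linForm (M : Matrix (Fin 3) (Fin 3) ℂ) (i : Fin 3) :
    MvPolynomial (Fin 3) ℂ :=
  ∑ j : Fin 3, C (M i j) * X j

/-- Substitution of the linear forms determined by `M` into `g`. -/
noncomputable def substMat (M : Matrix (Fin 3) (Fin 3) ℂ)
    (g : MvPolynomial (Fin 3) ℂ) : MvPolynomial (Fin 3) ℂ :=
  aeval (fun i => linForm M i) g

/-! ### Linear vector fields and linear substitutions -/

/-- The linear vector field `∑ i, (M·X)_i ∂_i` attached to a matrix `M`, as a derivation. -/
noncomputable def linField (M : Matrix (Fin 3) (Fin 3) ℂ) :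
    Derivation ℂ (MvPolynomial (Fin 3) ℂ) (MvPolynomial (Fin 3) ℂ) :=
  mkDerivation ℂ (linForm M)

lemma linField_X (M : Matrix (Fin 3) (Fin 3) ℂ) (i : Fin 3) :
    linField M (X i) = linForm M i := mkDerivation_X _ _ _

lemma linField_apply (M : Matrix (Fin 3) (Fin 3) ℂ) (g : MvPolynomial (Fin 3) ℂ) :
    linField M g = ∑ i, linForm M i * pderiv i g := by
  have h : linField M = ∑ i, linForm M i • pderiv i := by
    refine derivation_ext fun j => ?_
    rw [linField_X]
    fin_cases j <;> simp [Fin.sum_univ_three, pderiv_X]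
  rw [h]
  simp [Fin.sum_univ_three]

lemma linForm_add (M K : Matrix (Fin 3) (Fin 3) ℂ) (i : Fin 3) :
    linForm (M + K) i = linForm M i + linForm K i := by
  simp [linForm, add_mul, Finset.sum_add_distrib]

lemma linField_add (M K : Matrix (Fin 3) (Fin 3) ℂ) (g : MvPolynomial (Fin 3) ℂ) :
    linField (M + K) g = linField M g + linField K g := by
  simp [linField_apply, linForm_add, add_mul, Finset.sum_add_distrib]

lemma linForm_zero (i : Fin 3) : linForm 0 i = 0 := by simp [linForm]

lemma linForm_one (i : Fin 3) : linForm 1 i = X i := by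
  simp [linForm, Matrix.one_apply]

lemma linField_C_mul (M : Matrix (Fin 3) (Fin 3) ℂ) (a : ℂ) (g : MvPolynomial (Fin 3) ℂ) :
    linField M (C a * g) = C a * linField M g := by
  simp [← smul_eq_C_mul]

lemma linField_linForm (M K : Matrix (Fin 3) (Fin 3) ℂ) (i : Fin 3) :
    linField M (linForm K i) = linForm (K * M) i := by
  conv_lhs => rw [linForm]
  simp only [map_sum, linField_C_mul, linField_X]
  simp only [linForm, Matrix.mul_apply, map_mul, map_add, Fin.sum_univ_three]
  ring

lemma linField_iterate_X (M : Matrix (Fin 3) (Fin 3) ℂ) (k : ℕ) (i : Fin 3) :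
    (linField M)^[k] (X i) = linForm (M ^ k) i := by
  induction k with
  | zero => simp [linForm_one]
  | succ k ih => rw [Function.iterate_succ_apply', ih, linField_linForm, pow_succ]

/-- Linear fields of commuting matrices commute. -/
lemma linField_comm {M K : Matrix (Fin 3) (Fin 3) ℂ} (h : Commute M K)
    (g : MvPolynomial (Fin 3) ℂ) :
    linField M (linField K g) = linField K (linField M g) := by
  have h0 : ⁅linField M, linField K⁆ = 0 := by
    refine derivation_ext fun i => ?_
    rw [Derivation.commutator_apply, linField_X, linField_X, linField_linForm, linField_linForm,
      h.eq, sub_self, Derivation.zero_apply]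
  have := congrArg (fun D => D g) h0
  simpa [Derivation.commutator_apply, sub_eq_zero] using this

lemma substMat_linForm (P K : Matrix (Fin 3) (Fin 3) ℂ) (i : Fin 3) :
    substMat P (linForm K i) = linForm (K * P) i := by
  simp only [substMat, linForm, Matrix.mul_apply, map_mul, Fin.sum_univ_three, aeval_X,
    algHom_C, algebraMap_eq, map_add]
  ring

lemma substMat_substMat (P Q : Matrix (Fin 3) (Fin 3) ℂ) (g : MvPolynomial (Fin 3) ℂ) :
    substMat Q (substMat P g) = substMat (P * Q) g := by
  have h : (aeval (linForm Q)).comp (aeval (linForm P)) =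
      (aeval (linForm (P * Q)) : MvPolynomial (Fin 3) ℂ →ₐ[ℂ] MvPolynomial (Fin 3) ℂ) := by
    refine algHom_ext fun i => ?_
    rw [AlgHom.comp_apply, aeval_X, aeval_X]
    exact substMat_linForm Q P i
  exact congrArg (fun f => f g) h

lemma substMat_injective {P : Matrix (Fin 3) (Fin 3) ℂ} (hP : IsUnit P)
    {g : MvPolynomial (Fin 3) ℂ} (h : substMat P g = 0) : g = 0 := by
  obtain ⟨Q, hQ⟩ := hP.exists_right_inv
  have h1 : substMat 1 g = g := by simp [substMat, linForm_one]
  rw [← h1, ← hQ, ← substMat_substMat, h]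
  simp [substMat]

/-- If `M P = P M'`, then substituting along `P` turns the field of `M` into that of `M'`. -/
lemma linField_substMat {M P M' : Matrix (Fin 3) (Fin 3) ℂ} (h : M * P = P * M')
    (g : MvPolynomial (Fin 3) ℂ) :
    linField M' (substMat P g) = substMat P (linField M g) := by
  induction g using MvPolynomial.induction_on with
  | C a => simp [substMat, algebraMap_eq]
  | add p q hp hq => simp only [substMat, map_add] at *; rw [hp, hq]
  | mul_X p i hp =>
    have hX : linField M' (linForm P i) = substMat P (linForm M i) := by
      rw [linField_linForm, substMat_linForm, h]
    simp only [substMat, map_mul, Derivation.leibniz, aeval_X, linField_X, smul_eq_mul, map_add]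
      at *
    rw [hp, hX]

/-! ### Nilpotent and diagonalizable parts -/

/-- Leibniz rule: a product of polynomials killed by powers of a derivation is killed by a power. -/
lemma derivation_iterate_mul (D : Derivation ℂ (MvPolynomial (Fin 3) ℂ) (MvPolynomial (Fin 3) ℂ))
    (n : ℕ) : ∀ (a b : ℕ) (p q : MvPolynomial (Fin 3) ℂ), a + b = n →
      D^[a] p = 0 → D^[b] q = 0 → D^[n] (p * q) = 0 := by
  induction n with
  | zero =>
    intro a b p q hab hp hq
    obtain rfl : a = 0 := by omega
    simp_all
  | succ n ih =>
    intro a b p q hab hp hq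
    have z (k : ℕ) : D^[k] 0 = 0 := iterate_map_zero D k
    rcases a with _ | a
    · simp only [Function.iterate_zero, id_eq] at hp
      rw [hp, zero_mul, z]
    rcases b with _ | b
    · simp only [Function.iterate_zero, id_eq] at hq
      rw [hq, mul_zero, z]
    rw [Function.iterate_succ_apply, Derivation.leibniz, iterate_map_add, smul_eq_mul,
      smul_eq_mul]
    rw [ih (a + 1) b p (D q) (by omega) hp (by rwa [Function.iterate_succ_apply] at hq),
      ih (b + 1) a q (D p) (by omega) hq (by rwa [Function.iterate_succ_apply] at hp), add_zero]

lemma iterate_eq_zero_of_le (D : Derivation ℂ (MvPolynomial (Fin 3) ℂ) (MvPolynomial (Fin 3) ℂ))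
    {a b : ℕ} (hab : a ≤ b) {p : MvPolynomial (Fin 3) ℂ} (h : D^[a] p = 0) : D^[b] p = 0 := by
  obtain ⟨c, rfl⟩ := Nat.exists_eq_add_of_le' hab
  rw [Function.iterate_add_apply, h, iterate_map_zero]

/-- The field of a nilpotent matrix is a locally nilpotent derivation. -/
lemma linField_locally_nilpotent {N : Matrix (Fin 3) (Fin 3) ℂ} (hN : IsNilpotent N)
    (g : MvPolynomial (Fin 3) ℂ) : ∃ k, (linField N)^[k] g = 0 := by
  obtain ⟨r, hr⟩ := hN
  induction g using MvPolynomial.induction_on with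
  | C a => exact ⟨1, by simp⟩
  | add p q hp hq =>
    obtain ⟨a, ha⟩ := hp
    obtain ⟨b, hb⟩ := hq
    refine ⟨max a b, ?_⟩
    rw [iterate_map_add, iterate_eq_zero_of_le _ (le_max_left a b) ha,
      iterate_eq_zero_of_le _ (le_max_right a b) hb, add_zero]
  | mul_X p i hp =>
    obtain ⟨a, ha⟩ := hp
    refine ⟨a + r, derivation_iterate_mul _ _ a r _ _ rfl ha ?_⟩
    rw [linField_iterate_X, hr, linForm_zero]

lemma linForm_diagonal (a : Fin 3 → ℂ) (i : Fin 3) :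
    linForm (Matrix.diagonal a) i = C (a i) * X i := by
  simp [linForm, Matrix.diagonal_apply, apply_ite]

/-- Monomials are eigenvectors of the field of a diagonal matrix. -/
lemma coeff_linField_diagonal (a : Fin 3 → ℂ) (g : MvPolynomial (Fin 3) ℂ) (m : Fin 3 →₀ ℕ) :
    coeff m (linField (Matrix.diagonal a) g) = (∑ i, a i * m i) * coeff m g := by
  induction g using MvPolynomial.induction_on' with
  | monomial u r =>
    rw [linField_apply]
    simp only [linForm_diagonal, mul_assoc, X_mul_pderiv_monomial, coeff_sum, coeff_C_mul,
      coeff_smul, coeff_monomial]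
    split_ifs with h
    · subst h
      simp [Finset.sum_mul, mul_assoc]
    · simp
  | add p q hp hq => simp only [map_add, coeff_add, hp, hq, mul_add]

/-- The field of a diagonal matrix is a semisimple operator: its generalized kernel is its
kernel. -/
lemma linField_diagonal_eq_zero (a : Fin 3 → ℂ) (g : MvPolynomial (Fin 3) ℂ) (k : ℕ)
    (h : (linField (Matrix.diagonal a))^[k] g = 0) : linField (Matrix.diagonal a) g = 0 := by
  have hk : ∀ (k : ℕ) (m : Fin 3 →₀ ℕ), coeff m ((linField (Matrix.diagonal a))^[k] g) =
      (∑ i, a i * m i) ^ k * coeff m g := by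
    intro k m
    induction k with
    | zero => simp
    | succ k ih => rw [Function.iterate_succ_apply', coeff_linField_diagonal, ih]; ring
  ext m
  have := hk k m
  rw [h, coeff_zero, eq_comm, mul_eq_zero] at this
  rw [coeff_linField_diagonal, coeff_zero, mul_eq_zero]
  exact this.imp_left fun h => eq_zero_of_pow_eq_zero h

/-- If `S` and `N` commute, `S` is diagonalizable and `N` is nilpotent, then a polynomial killed
by the field of `S + N` is killed by the field of `S`. -/
lemma linField_semisimple_eq_zero {S N P : Matrix (Fin 3) (Fin 3) ℂ} {a : Fin 3 → ℂ}
    (hP : IsUnit P) (hS : S * P = P * Matrix.diagonal a) (hN : IsNilpotent N) (hc : Commute S N)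
    {g : MvPolynomial (Fin 3) ℂ} (h : linField (S + N) g = 0) : linField S g = 0 := by
  obtain ⟨k, hk⟩ := linField_locally_nilpotent hN g
  have hSN : linField S g = - linField N g := by
    rw [linField_add] at h
    exact eq_neg_of_add_eq_zero_left h
  have hit : ∀ j : ℕ, (linField S)^[j] g = (-1) ^ j * (linField N)^[j] g := by
    intro j
    have hcomm : ∀ j : ℕ, linField S ((linField N)^[j] g) = (linField N)^[j] (linField S g) := by
      intro j
      induction j with
      | zero => rfl
      | succ j ih => rw [Function.iterate_succ_apply', linField_comm hc, ih,
          Function.iterate_succ_apply']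
    induction j with
    | zero => simp
    | succ j ih =>
      have hpow : ((-1) ^ j : MvPolynomial (Fin 3) ℂ) = C ((-1) ^ j) := by simp
      rw [Function.iterate_succ_apply', ih, hpow, linField_C_mul, hcomm, hSN, iterate_map_neg,
        ← Function.iterate_succ_apply, ← hpow]
      ring
  have hz : (linField S)^[k] g = 0 := by rw [hit, hk, mul_zero]
  have hsub : ∀ j : ℕ, (linField (Matrix.diagonal a))^[j] (substMat P g) =
      substMat P ((linField S)^[j] g) := by
    intro j
    induction j with
    | zero => rfl
    | succ j ih => rw [Function.iterate_succ_apply', ih, linField_substMat hS,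
        Function.iterate_succ_apply']
  refine substMat_injective hP ?_
  rw [← linField_substMat hS]
  refine linField_diagonal_eq_zero a _ k ?_
  rw [hsub, hz]
  simp [substMat]

/-! ### Jordan-Chevalley decomposition and nilpotent matrices -/

/-- Over `ℂ`, a semisimple endomorphism is diagonalizable. -/
lemma exists_diagonalization (S : Matrix (Fin 3) (Fin 3) ℂ)
    (hS : Module.End.IsSemisimple (Matrix.toLinAlgEquiv' S)) :
    ∃ (P : Matrix (Fin 3) (Fin 3) ℂ) (a : Fin 3 → ℂ), IsUnit P ∧
      S * P = P * Matrix.diagonal a := by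
  set t : Set (Fin 3 → ℂ) := {v | ∃ μ : ℂ, S.mulVec v = μ • v} with ht
  have hspan : Submodule.span ℂ t = ⊤ := by
    rw [eq_top_iff, ← hS.iSup_eigenspace_eq_top, iSup_le_iff]
    intro μ v hv
    refine Submodule.subset_span ⟨μ, ?_⟩
    simpa using Module.End.mem_eigenspace_iff.1 hv
  obtain ⟨b, hbt, hb, hli⟩ := exists_linearIndependent ℂ t
  let B := Module.Basis.mk hli (by simp [hb, hspan])
  have : Fintype b := FiniteDimensional.fintypeBasisIndex B
  have hcard : Fintype.card b = 3 := by
    rw [← Module.finrank_eq_card_basis B]; simp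
  let B' := B.reindex (Fintype.equivFinOfCardEq hcard)
  have hB' : ∀ i, ∃ μ : ℂ, S.mulVec (B' i) = μ • B' i := by
    intro i
    apply hbt
    simp [B', B]
  choose a ha using hB'
  refine ⟨Matrix.of fun i j => B' j i, a, ?_, ?_⟩
  · rw [← Matrix.linearIndependent_cols_iff_isUnit]
    exact B'.linearIndependent
  · ext i j
    rw [Matrix.mul_diagonal]
    have := congrFun (ha j) i
    simpa [Matrix.mul_apply, Matrix.mulVec, dotProduct, mul_comm] using this

/-- Jordan-Chevalley decomposition of a matrix, with an eigenbasis for the semisimple part. -/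
lemma exists_jordan_chevalley (M : Matrix (Fin 3) (Fin 3) ℂ) :
    ∃ (S N P : Matrix (Fin 3) (Fin 3) ℂ) (a : Fin 3 → ℂ), M = S + N ∧ Commute S N ∧
      IsNilpotent N ∧ IsUnit P ∧ S * P = P * Matrix.diagonal a := by
  obtain ⟨n, hn, s, hs, hnil, hss, hf⟩ :=
    Module.End.exists_isNilpotent_isSemisimple (f := Matrix.toLinAlgEquiv' M)
  obtain ⟨N, rfl⟩ := Matrix.toLinAlgEquiv'.surjective n
  obtain ⟨S, rfl⟩ := Matrix.toLinAlgEquiv'.surjective s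
  have hM : M = S + N := by
    apply Matrix.toLinAlgEquiv'.injective
    rw [hf, map_add, add_comm]
  obtain ⟨P, a, hP, hSP⟩ := exists_diagonalization S hss
  refine ⟨S, N, P, a, hM, ?_, ?_, hP, hSP⟩
  · have h1 : Commute (Matrix.toLinAlgEquiv' M) (Matrix.toLinAlgEquiv' S) :=
      Algebra.commute_of_mem_adjoin_self hs
    have h2 : Commute M S := by
      apply Matrix.toLinAlgEquiv'.injective
      rw [map_mul, map_mul]
      exact h1.eq
    have h3 : N = M - S := by rw [hM]; abel
    rw [h3]
    exact h2.symm.sub_right (Commute.refl S)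
  · exact (IsNilpotent.map_iff Matrix.toLinAlgEquiv'.injective).1 hnil

/-- A square-zero matrix `N ≠ 0` of size `3` has rank one, so that its field is a linear form times
a constant field; it cannot kill a polynomial with independent partial derivatives. -/
lemma eq_zero_of_sq_eq_zero {N : Matrix (Fin 3) (Fin 3) ℂ} (hN : N * N = 0)
    {g : MvPolynomial (Fin 3) ℂ}
    (hind : LinearIndependent ℂ ![pderiv 0 g, pderiv 1 g, pderiv 2 g])
    (h : linField N g = 0) : N = 0 := by
  have hrk : Module.finrank ℂ (LinearMap.range N.toLin') ≤ 1 := by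
    have h1 := LinearMap.finrank_range_add_finrank_ker N.toLin'
    have h2 : LinearMap.range N.toLin' ≤ LinearMap.ker N.toLin' := by
      rintro _ ⟨v, rfl⟩
      simp [hN]
    have h3 := Submodule.finrank_mono h2
    simp at h1
    omega
  obtain ⟨u, hu⟩ := finrank_le_one_iff.1 hrk
  have hcol : ∀ j, ∃ c : ℂ, ∀ i, N i j = u.1 i * c := by
    intro j
    obtain ⟨c, hc⟩ := hu ⟨N.toLin' (Pi.single j 1), LinearMap.mem_range_self _ _⟩
    refine ⟨c, fun i => ?_⟩
    have := congrFun (congrArg Subtype.val hc) i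
    simp at this
    rw [← this, mul_comm]
  choose w hw using hcol
  have hfac : (∑ j, C (w j) * X j) * (∑ i, C (u.1 i) * pderiv i g) = 0 := by
    rw [← h, linField_apply]
    simp only [linForm, hw, map_mul, Fin.sum_univ_three]
    ring
  rcases mul_eq_zero.1 hfac with h0 | h0
  · have hw0 : ∀ j, w j = 0 := by
      intro j
      have := congrArg (pderiv j) h0
      fin_cases j <;> simpa [Fin.sum_univ_three, pderiv_X, Pi.single_apply] using this
    ext i j
    simp [hw, hw0]
  · have hu0 : ∀ i, u.1 i = 0 := by
      refine Fintype.linearIndependent_iff.1 hind u.1 ?_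
      rw [← h0]
      simp [Fin.sum_univ_three, smul_eq_C_mul]
    ext i j
    simp [hw, hu0]

/-- A nilpotent matrix of size `3` with non-zero square is a single Jordan block. -/
lemma exists_jordan_block {N : Matrix (Fin 3) (Fin 3) ℂ} (hN : IsNilpotent N) (h2 : N * N ≠ 0) :
    ∃ P : Matrix (Fin 3) (Fin 3) ℂ, IsUnit P ∧ N * P = P * !![0, 1, 0; 0, 0, 1; 0, 0, 0] := by
  have h3 : N * (N * N) = 0 := by
    have h := (N.isNilpotent_charpoly_sub_pow_of_isNilpotent hN).eq_zero
    have h' := N.aeval_self_charpoly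
    rw [sub_eq_zero.1 h] at h'
    simpa [pow_succ, mul_assoc] using h'
  obtain ⟨v, hv⟩ : ∃ v, (N * N).mulVec v ≠ 0 := by
    by_contra! hcon
    exact h2 (Matrix.ext_of_mulVec_single fun i => by rw [hcon, Matrix.zero_mulVec])
  have hv3 : N.mulVec ((N * N).mulVec v) = 0 := by simp [h3]
  have hvv : N.mulVec (N.mulVec v) = (N * N).mulVec v := by simp
  set p := (N * N).mulVec v with hp
  set q := N.mulVec v with hq
  refine ⟨Matrix.of fun i j => ![p, q, v] j i, ?_, ?_⟩
  · rw [← Matrix.linearIndependent_cols_iff_isUnit]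
    change LinearIndependent ℂ ![p, q, v]
    rw [Fintype.linearIndependent_iff]
    intro c hc
    simp only [Fin.sum_univ_three, Matrix.cons_val_zero, Matrix.cons_val_one, Matrix.cons_val]
      at hc
    have e1 := congrArg N.mulVec hc
    simp only [Matrix.mulVec_add, Matrix.mulVec_smul, hv3, hvv, ← hq, Matrix.mulVec_zero,
      smul_zero, zero_add] at e1
    have e2 := congrArg N.mulVec e1
    simp only [Matrix.mulVec_add, Matrix.mulVec_smul, hv3, hvv, Matrix.mulVec_zero,
      smul_zero, zero_add] at e2
    have c2 : c 2 = 0 := (smul_eq_zero.1 e2).resolve_right hv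
    have c1 : c 1 = 0 := by
      rw [c2, zero_smul, add_zero] at e1
      exact (smul_eq_zero.1 e1).resolve_right hv
    have c0 : c 0 = 0 := by
      rw [c2, c1, zero_smul, zero_smul, add_zero, add_zero] at hc
      exact (smul_eq_zero.1 hc).resolve_right hv
    intro i
    fin_cases i <;> assumption
  · ext i j
    have a0 := congrFun hv3 i
    have a1 := congrFun hvv i
    have a2 := congrFun hq i
    simp only [Matrix.mulVec, dotProduct, Fin.sum_univ_three, Pi.zero_apply] at a0 a1 a2
    fin_cases j
    · simpa [Matrix.mul_apply, Fin.sum_univ_three] using a0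
    · simpa [Matrix.mul_apply, Fin.sum_univ_three] using a1
    · simpa [Matrix.mul_apply, Fin.sum_univ_three] using a2.symm

/-! ### Linear syzygies -/

lemma exists_linear_coeffs {A : MvPolynomial (Fin 3) ℂ} (hA : A.IsHomogeneous 1) :
    ∃ c : Fin 3 → ℂ, A = ∑ j, C (c j) * X j := by
  have h : ∀ j, ∃ c : ℂ, pderiv j A = C c := fun j =>
    ⟨_, totalDegree_eq_zero_iff_eq_C.1 (Nat.le_zero.1 hA.pderiv.totalDegree_le)⟩
  choose c hc using h
  refine ⟨c, ?_⟩
  have := hA.sum_X_mul_pderiv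
  rw [one_smul] at this
  rw [← this]
  simp [hc, mul_comm]

/-- A diagonalizable `S ≠ 0` whose field kills `g` yields a diagonal syzygy, with non-zero first
coefficient and coefficients not all equal, in a suitable eigenbasis of `S`. -/
lemma exists_diagonal_syzygy {n : ℕ} (hn0 : n ≠ 0) {g : MvPolynomial (Fin 3) ℂ} (hg0 : g ≠ 0)
    (hg : g.IsHomogeneous n) {S P : Matrix (Fin 3) (Fin 3) ℂ} {a : Fin 3 → ℂ} (hS0 : S ≠ 0)
    (hP : IsUnit P) (hSP : S * P = P * Matrix.diagonal a) (hSg : linField S g = 0) :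
    ∃ N : Matrix (Fin 3) (Fin 3) ℂ, IsUnit N ∧ ∃ a b c : ℂ, a ≠ 0 ∧ ¬(a = b ∧ b = c) ∧
      C a * X 0 * pderiv 0 (substMat N g) + C b * X 1 * pderiv 1 (substMat N g) +
        C c * X 2 * pderiv 2 (substMat N g) = 0 := by
  have hi : ∃ i, a i ≠ 0 := by
    by_contra! hcon
    obtain rfl : a = 0 := funext hcon
    obtain ⟨Q, hQ⟩ := hP.exists_right_inv
    refine hS0 ?_
    rw [← mul_one S, ← hQ, ← mul_assoc, hSP]
    simp
  obtain ⟨i, hi⟩ := hi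
  -- Reorder the eigenbasis so that the first eigenvalue is non-zero.
  obtain ⟨P', a', hP', hSP', ha'⟩ : ∃ (P' : Matrix (Fin 3) (Fin 3) ℂ) (a' : Fin 3 → ℂ),
      IsUnit P' ∧ S * P' = P' * Matrix.diagonal a' ∧ a' 0 ≠ 0 := by
    refine ⟨P.submatrix id (Equiv.swap 0 i), a ∘ Equiv.swap 0 i, ?_, ?_, by simpa using hi⟩
    · exact (Matrix.isUnit_submatrix_equiv (A := P) (Equiv.refl _) (Equiv.swap 0 i)).2 hP
    · ext k l
      have := congrFun (congrFun hSP k) (Equiv.swap 0 i l)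
      rw [Matrix.mul_diagonal] at this ⊢
      simpa [Matrix.mul_apply] using this
  have hfield := linField_substMat hSP' g
  rw [hSg, linField_apply, Fin.sum_univ_three] at hfield
  simp only [linForm_diagonal] at hfield
  refine ⟨P', hP', a' 0, a' 1, a' 2, ha', ?_, ?_⟩
  · -- A scalar matrix `λ` acts on `g` as `λ n`, by Euler's identity.
    rintro ⟨h01, h12⟩
    have hdiag : Matrix.diagonal a' = a' 0 • (1 : Matrix (Fin 3) (Fin 3) ℂ) := by
      ext k l
      fin_cases k <;> fin_cases l <;> simp [← h12, ← h01]
    have hSscal : S = a' 0 • (1 : Matrix (Fin 3) (Fin 3) ℂ) := by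
      rw [hdiag, mul_smul_comm, mul_one] at hSP'
      exact hP'.mul_right_cancel (by rw [hSP', smul_mul_assoc, one_mul])
    have heul := hg.sum_X_mul_pderiv
    have hlin : linField S g = C (a' 0) * ∑ i, X i * pderiv i g := by
      have hform : ∀ i, linForm S i = C (a' 0) * X i := fun i => by
        rw [hSscal, ← Matrix.diagonal_one, ← Matrix.diagonal_smul, linForm_diagonal, Pi.smul_apply,
          smul_eq_mul, mul_one]
      simp only [linField_apply, hform, Finset.mul_sum, mul_assoc]
    rw [hSg, heul, eq_comm] at hlin
    rcases mul_eq_zero.1 hlin with h0 | h0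
    · exact ha' (C_eq_zero.1 h0)
    · exact (smul_ne_zero hn0 hg0) h0
  · rw [hfield]
    simp [substMat]

theorem stmt_5 (n : ℕ) (hn : 3 ≤ n) (g : MvPolynomial (Fin 3) ℂ)
    (hg0 : g ≠ 0) (hgsf : Squarefree g) (hg : g.IsHomogeneous n)
    (hind : LinearIndependent ℂ ![pderiv 0 g, pderiv 1 g, pderiv 2 g])
    (A B C' : MvPolynomial (Fin 3) ℂ)
    (hA : A.IsHomogeneous 1) (hB : B.IsHomogeneous 1) (hC : C'.IsHomogeneous 1)
    (hABC : ¬(A = 0 ∧ B = 0 ∧ C' = 0))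
    (hsyz : A * pderiv 0 g + B * pderiv 1 g + C' * pderiv 2 g = 0) :
    ∃ N : Matrix (Fin 3) (Fin 3) ℂ, IsUnit N ∧
      ((∃ a b c : ℂ, a ≠ 0 ∧ ¬(a = b ∧ b = c) ∧
          C a * X 0 * pderiv 0 (substMat N g) + C b * X 1 * pderiv 1 (substMat N g) +
            C c * X 2 * pderiv 2 (substMat N g) = 0) ∨
        X 1 * pderiv 0 (substMat N g) + X 2 * pderiv 1 (substMat N g) = 0) := by
  obtain ⟨α, hα⟩ := exists_linear_coeffs hA
  obtain ⟨β, hβ⟩ := exists_linear_coeffs hB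
  obtain ⟨γ, hγ⟩ := exists_linear_coeffs hC
  obtain ⟨M, hM⟩ : ∃ M : Matrix (Fin 3) (Fin 3) ℂ, M = Matrix.of ![α, β, γ] := ⟨_, rfl⟩
  have hMA : linForm M 0 = A := by simp [hM, linForm, hα]
  have hMB : linForm M 1 = B := by simp [hM, linForm, hβ]
  have hMC : linForm M 2 = C' := by simp [hM, linForm, hγ]
  have hM0 : M ≠ 0 := by
    rintro rfl
    simp only [linForm_zero] at hMA hMB hMC
    exact hABC ⟨hMA.symm, hMB.symm, hMC.symm⟩
  have hMg : linField M g = 0 := by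
    rw [linField_apply, Fin.sum_univ_three, hMA, hMB, hMC, hsyz]
  obtain ⟨S, N, P, a, hSN, hcomm, hnil, hP, hSP⟩ := exists_jordan_chevalley M
  rw [hSN] at hMg
  have hSg : linField S g = 0 := linField_semisimple_eq_zero hP hSP hnil hcomm hMg
  by_cases hN : N = 0
  · rw [hN, add_zero] at hSN
    rw [hSN] at hM0
    obtain ⟨Q, hQ, a, b, c, h⟩ := exists_diagonal_syzygy (by omega) hg0 hg hM0 hP hSP hSg
    exact ⟨Q, hQ, Or.inl ⟨a, b, c, h⟩⟩
  · have hNg : linField N g = 0 := neg_eq_zero.1 <|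
      (eq_neg_of_add_eq_zero_left ((linField_add S N g).symm.trans hMg)).symm.trans hSg
    have hN2 : N * N ≠ 0 := fun h => hN (eq_zero_of_sq_eq_zero h hind hNg)
    obtain ⟨Q, hQ, hNQ⟩ := exists_jordan_block hnil hN2
    refine ⟨Q, hQ, Or.inr ?_⟩
    have hfield := linField_substMat hNQ g
    have h0 : substMat Q (0 : MvPolynomial (Fin 3) ℂ) = 0 := by simp [substMat]
    rw [hNg, h0, linField_apply] at hfield
    rw [← hfield]
    simp [linForm, Fin.sum_univ_three]
end

section
/- Let n ≥ 2, let a, b, c ∈ ℂ with a ≠ 0, and let d_{0jk} (for j + k = n − 2), e_{ijk} and f_{ijk} (for i + j + k = n − 2, all indices ≥ 0) be complex numbers. Then the following two systems of equations are equivalent. System (I): for all i, j, k ≥ 0 with i + j + k = n − 2: ((i+1)a + (j+1)b)·f_{ij0} = 0 when k = 0; ((i+1)a + (j+1)b)·f_{ijk} − (j+1)c·e_{i,j+1,k−1} = 0 when k > 0; ((i+1)a + (k+1)c)·e_{i0k} = 0 when j = 0; ((i+1)a + (k+1)c)·e_{ijk} − (k+1)b·f_{i,j−1,k+1} = 0 when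 j > 0; ((j+1)b + (k+1)c)·d_{0jk} = 0 when i = 0; (j+1)·e_{i−1,j+1,k} + (k+1)·f_{i−1,j,k+1} = 0 when i > 0. System (II): for all i, j, k ≥ 0 with i + j + k = n: e_{i−1,j,k−1}·(ia + jb + kc) = 0 when i > 0 and k > 0; f_{i−1,j−1,k}·(ia + jb + kc) = 0 when i > 0 and j > 0; d_{0,j−1,k−1}·(jb + kc) = 0 when i = 0, j > 0 and k > 0; and j·e_{i−1,j,k−1} + k·f_{i−1,j−1,k} = 0 when i > 0, j > 0 and k > 0. -/
/-!
The systems correspond after shifting the indices by one. Away from the boundary, the linear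
relation `j * e + k * f = 0` is common to both; multiplied by `b` (resp. `c`), it turns the
off-diagonal term `k * b * f` (resp. `j * c * e`) of System (I) into the missing summand
`j * b * e` (resp. `k * c * f`) of the product with `i * a + j * b + k * c` in System (II).
At `j = 0` (resp. `k = 0`) that summand vanishes.
-/

theorem stmt_7 (n : ℕ) (hn : 2 ≤ n) (a b c : ℂ) (ha : a ≠ 0)
    (d e f : ℕ → ℕ → ℕ → ℂ) :
    -- System (I)
    ((∀ i j k : ℕ, i + j + k = n - 2 →
        (k = 0 → (((i : ℂ) + 1) * a + ((j : ℂ) + 1) * b) * f i j 0 = 0) ∧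
        (0 < k → (((i : ℂ) + 1) * a + ((j : ℂ) + 1) * b) * f i j k -
          ((j : ℂ) + 1) * c * e i (j + 1) (k - 1) = 0) ∧
        (j = 0 → (((i : ℂ) + 1) * a + ((k : ℂ) + 1) * c) * e i 0 k = 0) ∧
        (0 < j → (((i : ℂ) + 1) * a + ((k : ℂ) + 1) * c) * e i j k -
          ((k : ℂ) + 1) * b * f i (j - 1) (k + 1) = 0) ∧
        (i = 0 → (((j : ℂ) + 1) * b + ((k : ℂ) + 1) * c) * d 0 j k = 0) ∧
        (0 < i → ((j : ℂ) + 1) * e (i - 1) (j + 1) k +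
          ((k : ℂ) + 1) * f (i - 1) j (k + 1) = 0)) ↔
    -- System (II)
      (∀ i j k : ℕ, i + j + k = n →
        (0 < i → 0 < k →
          e (i - 1) j (k - 1) * ((i : ℂ) * a + (j : ℂ) * b + (k : ℂ) * c) = 0) ∧
        (0 < i → 0 < j →
          f (i - 1) (j - 1) k * ((i : ℂ) * a + (j : ℂ) * b + (k : ℂ) * c) = 0) ∧
        (i = 0 → 0 < j → 0 < k →
          d 0 (j - 1) (k - 1) * ((j : ℂ) * b + (k : ℂ) * c) = 0) ∧
        (0 < i → 0 < j → 0 < k →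
          (j : ℂ) * e (i - 1) j (k - 1) + (k : ℂ) * f (i - 1) (j - 1) k = 0))) := by
  constructor
  · intro h i j k hs
    refine ⟨fun hi hk => ?_, fun hi hj => ?_, fun hi hj hk => ?_, fun hi hj hk => ?_⟩
    · obtain ⟨i, rfl⟩ := Nat.exists_eq_add_of_lt hi
      obtain ⟨k, rfl⟩ := Nat.exists_eq_add_of_lt hk
      simp only [zero_add, Nat.add_sub_cancel] at *
      rcases j with _ | j
      · have h1 := (h i 0 k (by omega)).2.2.1 rfl
        push_cast
        linear_combination h1
      · have h1 := (h i (j + 1) k (by omega)).2.2.2.1 (by omega)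
        have h2 := (h (i + 1) j k (by omega)).2.2.2.2.2 (by omega)
        simp only [Nat.add_sub_cancel] at h1 h2
        push_cast
        linear_combination h1 + b * h2
    · obtain ⟨i, rfl⟩ := Nat.exists_eq_add_of_lt hi
      obtain ⟨j, rfl⟩ := Nat.exists_eq_add_of_lt hj
      simp only [zero_add, Nat.add_sub_cancel] at *
      rcases k with _ | k
      · have h1 := (h i j 0 (by omega)).1 rfl
        push_cast
        linear_combination h1
      · have h1 := (h i j (k + 1) (by omega)).2.1 (by omega)
        have h2 := (h (i + 1) j k (by omega)).2.2.2.2.2 (by omega)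
        simp only [Nat.add_sub_cancel] at h1 h2
        push_cast
        linear_combination h1 + c * h2
    · obtain ⟨j, rfl⟩ := Nat.exists_eq_add_of_lt hj
      obtain ⟨k, rfl⟩ := Nat.exists_eq_add_of_lt hk
      simp only [zero_add, Nat.add_sub_cancel] at *
      have h1 := (h 0 j k (by omega)).2.2.2.2.1 rfl
      push_cast
      linear_combination h1
    · obtain ⟨j, rfl⟩ := Nat.exists_eq_add_of_lt hj
      obtain ⟨k, rfl⟩ := Nat.exists_eq_add_of_lt hk
      simp only [zero_add, Nat.add_sub_cancel] at *
      have h1 := (h i j k (by omega)).2.2.2.2.2 hi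
      push_cast
      linear_combination h1
  · intro h i j k hs
    refine ⟨fun hk => ?_, fun hk => ?_, fun hj => ?_, fun hj => ?_, fun hi => ?_, fun hi => ?_⟩
    · subst hk
      have h1 := (h (i + 1) (j + 1) 0 (by omega)).2.1 (by omega) (by omega)
      simp only [Nat.add_sub_cancel] at h1
      push_cast at h1
      linear_combination h1
    · have h1 := (h (i + 1) (j + 1) k (by omega)).2.1 (by omega) (by omega)
      have h2 := (h (i + 1) (j + 1) k (by omega)).2.2.2 (by omega) (by omega) hk
      simp only [Nat.add_sub_cancel] at h1 h2
      push_cast at h1 h2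
      linear_combination h1 - c * h2
    · subst hj
      have h1 := (h (i + 1) 0 (k + 1) (by omega)).1 (by omega) (by omega)
      simp only [Nat.add_sub_cancel] at h1
      push_cast at h1
      linear_combination h1
    · have h1 := (h (i + 1) j (k + 1) (by omega)).1 (by omega) (by omega)
      have h2 := (h (i + 1) j (k + 1) (by omega)).2.2.2 (by omega) hj (by omega)
      simp only [Nat.add_sub_cancel] at h1 h2
      push_cast at h1 h2
      linear_combination h1 - b * h2
    · have h1 := (h 0 (j + 1) (k + 1) (by omega)).2.2.1 rfl (by omega) (by omega)
      simp only [Nat.add_sub_cancel] at h1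
      push_cast at h1
      linear_combination h1
    · have h1 := (h i (j + 1) (k + 1) (by omega)).2.2.2 hi (by omega) (by omega)
      simp only [Nat.add_sub_cancel] at h1
      push_cast at h1
      linear_combination h1
end

section
/- Let n ≥ 1 and let P, Q be two distinct points of T' that are collinear in ℤ³ with the point (n,0,0). If a, b, c ∈ ℂ satisfy a·P₁ + b·P₂ + c·P₃ = 0 and a·Q₁ + b·Q₂ + c·Q₃ = 0, then a = 0. -/
/-!
Write `V = (n, 0, 0)`. Collinearity gives a direction `v` and scalars `r`, `s` with
`P = V + r v` and `Q = V + s v`, so `s P - r Q = (s - r) V`. The linear form with coefficients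
`(a, b, c)` vanishes at `P` and `Q`, hence at `(s - r) V`, which says `(s - r) n a = 0`. Here
`s ≠ r` because `P ≠ Q`, and `n ≠ 0`.
-/

open scoped BigOperators

/-- Embedding of an integer point of `ℕ³` into `ℚ³`. -/
def emb (p : ℕ × ℕ × ℕ) : Fin 3 → ℚ := ![(p.1 : ℚ), (p.2.1 : ℚ), (p.2.2 : ℚ)]

/-- The triangle grid of size `n` with the three vertices removed. -/
def Tprime (n : ℕ) : Set (ℕ × ℕ × ℕ) :=
  {p | p.1 + p.2.1 + p.2.2 = n} \ {(n, 0, 0), (0, n, 0), (0, 0, n)}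

/-- `H` is a maximal segment of `T'`: it has at least two points, all its points
are collinear, and it contains every point of `T'` on the line through two of its
points. -/
def IsMaxSegment (n : ℕ) (H : Set (ℕ × ℕ × ℕ)) : Prop :=
  H ⊆ Tprime n ∧ (∃ P ∈ H, ∃ Q ∈ H, P ≠ Q) ∧ Collinear ℚ (emb '' H) ∧
    ∀ R ∈ Tprime n,
      (∃ P ∈ H, ∃ Q ∈ H, P ≠ Q ∧ Collinear ℚ {emb P, emb Q, emb R}) → R ∈ H

theorem stmt_9 (n : ℕ) (hn : 1 ≤ n) (P Q : ℕ × ℕ × ℕ)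
    (hP : P ∈ Tprime n) (hQ : Q ∈ Tprime n) (hPQ : P ≠ Q)
    (hcol : Collinear ℚ {emb P, emb Q, emb (n, 0, 0)})
    (a b c : ℂ)
    (h1 : a * (P.1 : ℂ) + b * (P.2.1 : ℂ) + c * (P.2.2 : ℂ) = 0)
    (h2 : a * (Q.1 : ℂ) + b * (Q.2.1 : ℂ) + c * (Q.2.2 : ℂ) = 0) :
    a = 0 := by
  obtain ⟨v, hv⟩ := (collinear_iff_of_mem (p₀ := emb (n, 0, 0)) (by simp)).1 hcol
  obtain ⟨r, hr⟩ := hv (emb P) (by simp)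
  obtain ⟨s, hs⟩ := hv (emb Q) (by simp)
  have hrs : s ≠ r := by
    rintro rfl
    have hE : emb P = emb Q := hr.trans hs.symm
    have e0 := congrFun hE 0
    have e1 := congrFun hE 1
    have e2 := congrFun hE 2
    simp only [emb, Matrix.cons_val, Nat.cast_inj] at e0 e1 e2
    exact hPQ (Prod.ext e0 (Prod.ext e1 e2))
  have p0 := congrFun hr 0
  have p1 := congrFun hr 1
  have p2 := congrFun hr 2
  have q0 := congrFun hs 0
  have q1 := congrFun hs 1
  have q2 := congrFun hs 2
  simp only [emb, Matrix.cons_val, vadd_eq_add, Pi.add_apply, Pi.smul_apply, smul_eq_mul,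
    Nat.cast_zero, add_zero] at p0 p1 p2 q0 q1 q2
  -- The coordinates of `s P - r Q = (s - r) V`, over `ℚ`.
  have k0 : s * (P.1 : ℚ) - r * (Q.1 : ℚ) = (s - r) * n := by rw [p0, q0]; ring
  have k1 : s * (P.2.1 : ℚ) - r * (Q.2.1 : ℚ) = 0 := by rw [p1, q1]; ring
  have k2 : s * (P.2.2 : ℚ) - r * (Q.2.2 : ℚ) = 0 := by rw [p2, q2]; ring
  have c0 : (s : ℂ) * (P.1 : ℂ) - r * (Q.1 : ℂ) = (s - r) * n := by exact_mod_cast k0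
  have c1 : (s : ℂ) * (P.2.1 : ℂ) - r * (Q.2.1 : ℂ) = 0 := by exact_mod_cast k1
  have c2 : (s : ℂ) * (P.2.2 : ℂ) - r * (Q.2.2 : ℂ) = 0 := by exact_mod_cast k2
  have key : a * (((s : ℂ) - r) * n) = 0 := by
    linear_combination s * h1 - r * h2 - a * c0 - b * c1 - c * c2
  have hsr : (s : ℂ) - r ≠ 0 := sub_ne_zero.2 (by exact_mod_cast hrs)
  have hn0 : (n : ℂ) ≠ 0 := by exact_mod_cast (by omega : n ≠ 0)
  exact (mul_eq_zero.1 key).resolve_right (mul_ne_zero hsr hn0)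
end

section
/- For m ≥ 1 define α(m) = 3·Σ_{j=1}^{m−1} φ(j)·(b(m−j+1) − b(m−2j+1)), where b(i) = i(i−1)/2 for i ≥ 2 and b(i) = 0 for i ≤ 1, and φ is Euler's totient function. Then for every integer n ≥ 3, the number of maximal segments of T' whose points contain no two points collinear (in ℤ³) with (n,0,0) equals α(n+1) − Σ_{i=2}^{n} φ(i) − 2·Σ_{i=⌊n/2⌋+1}^{n} φ(i) − 2. Equivalently, the number of elements in the primary decomposition of Proposition 4.3 — namely 1 plus the number of points of T' plus the number of such maximal segments — equals (1/2)(n−1)(n+4) + α(n+1) − Σ_{i=2}^{n} φ(i) − 2·Σ_{i=⌊n/2⌋+1}^{n} φ(i) − 1. -/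
/-! A good segment is the trace on `T'` of a line that joins two distinct points of `T'` and avoids
`(n,0,0)` (`mem_goodSegments`; collinearity in the plane `i + j + k = n` is the vanishing of a
`2 × 2` determinant, `area`).

Up to sign and a unique cyclic rotation of the coordinates, the primitive direction of such a line
is `(a + b, -a, -b)` with `0 ≤ a`, `1 ≤ b` and `gcd(a, b) = 1`. With `j = a + b` there are `φ(j)`
such directions for each rotation, which explains the factor `3` in `α`. A line with a given
direction `d` is determined by its endpoint `E` in the triangle, that is, by the point `E` for which
`E - d` lies in the triangle and `E + d` does not. The points `E` with `E - d` in the triangle form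
a triangle with `b(n - j + 2)` points, and those for which `E + d` is in the triangle too form a
translate of a triangle with `b(n - 2j + 2)` points (`card_ends`). Summing the differences gives
`α(n + 1)`, the number of all lines.

The lines to discard end, after rotation, at `(n,0,0)`. In the unrotated position all of these pass
through the vertex `(n,0,0)`, so `∑_{1 ≤ j ≤ n} φ(j)` lines are lost. In the two other positions
such a line is lost when `2j > n`, since it then has only one point besides its end vertex, and in
one of the two positions also for `j = 1`, where it is the remaining edge at `(n,0,0)`. The
predicate `ok` records the lines that are kept.

Thus `(rotation, j, a, E)` encodes the good segments: `seg_mem_goodSegments` and `exists_seg` show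
that admissible codes give exactly the good segments, `seg_injective` that the code is unique, and
`card_codes` counts the codes. -/

open scoped BigOperators

/-- `b i = i(i-1)/2`, i.e. the binomial coefficient `C(i,2)` (which is `0` for `i ≤ 1`). -/
def bfun (i : ℕ) : ℕ := i * (i - 1) / 2

/-- The number of lines through at least two points of a triangular grid of side `m`. -/
def alphafun (m : ℕ) : ℕ :=
  3 * ∑ j ∈ Finset.Icc 1 (m - 1),
    Nat.totient j * (bfun (m - j + 1) - bfun (m - 2 * j + 1))

/-- The maximal segments of `T'` none of whose pairs of points is collinear with
`(n,0,0)`. -/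
def goodSegments (n : ℕ) : Set (Set (ℕ × ℕ × ℕ)) :=
  {H | IsMaxSegment n H ∧ ∀ P ∈ H, ∀ Q ∈ H, P ≠ Q →
    ¬ Collinear ℚ {emb P, emb Q, emb (n, 0, 0)}}

/-! ### Lines in the plane `i + j + k = n` -/

/-- Twice the signed area of the triangle `P Q R`, seen in the last two coordinates. On the plane
`i + j + k = n` these two coordinates determine the point. -/
def area (P Q R : ℕ × ℕ × ℕ) : ℤ :=
  ((Q.2.1 : ℤ) - P.2.1) * ((R.2.2 : ℤ) - P.2.2) - ((Q.2.2 : ℤ) - P.2.2) * ((R.2.1 : ℤ) - P.2.1)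

/-- The plane `i + j + k = n`. -/
def OnPlane (n : ℕ) (P : ℕ × ℕ × ℕ) : Prop := P.1 + P.2.1 + P.2.2 = n

lemma mem_Tprime {n : ℕ} {P : ℕ × ℕ × ℕ} :
    P ∈ Tprime n ↔ OnPlane n P ∧ P.1 ≠ n ∧ P.2.1 ≠ n ∧ P.2.2 ≠ n := by
  obtain ⟨x, y, z⟩ := P
  simp only [Tprime, OnPlane, Set.mem_sdiff, Set.mem_ofPred_eq, Set.mem_insert_iff,
    Set.mem_singleton_iff, Prod.mk.injEq]
  omega

lemma ne_coords {n : ℕ} {P Q : ℕ × ℕ × ℕ} (hP : OnPlane n P) (hQ : OnPlane n Q) (h : P ≠ Q) :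
    (Q.2.1 : ℤ) - P.2.1 ≠ 0 ∨ (Q.2.2 : ℤ) - P.2.2 ≠ 0 := by
  obtain ⟨x, y, z⟩ := P
  obtain ⟨x', y', z'⟩ := Q
  simp only [OnPlane, ne_eq, Prod.mk.injEq] at *
  omega

/-- If `P'` and `Q'` are distinct points of the line `PQ`, every point of the line `P'Q'` is on
the line `PQ`. -/
lemma area_trans {n : ℕ} {P Q P' Q' R : ℕ × ℕ × ℕ} (hP' : OnPlane n P') (hQ' : OnPlane n Q')
    (hne : P' ≠ Q') (h1 : area P Q P' = 0) (h2 : area P Q Q' = 0) (h3 : area P' Q' R = 0) :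
    area P Q R = 0 := by
  unfold area at *
  rcases ne_coords hP' hQ' hne with h | h
  · refine (mul_eq_zero.mp ?_).resolve_left h
    linear_combination ((Q.2.1 : ℤ) - P.2.1) * h3 + ((Q'.2.1 : ℤ) - P'.2.1) * h1 +
      ((R.2.1 : ℤ) - P'.2.1) * (h2 - h1)
  · refine (mul_eq_zero.mp ?_).resolve_left h
    linear_combination ((Q.2.2 : ℤ) - P.2.2) * h3 + ((Q'.2.2 : ℤ) - P'.2.2) * h1 +
      ((R.2.2 : ℤ) - P'.2.2) * (h2 - h1)

lemma exists_smul_of_area {n : ℕ} {P Q R : ℕ × ℕ × ℕ} (hP : OnPlane n P) (hQ : OnPlane n Q)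
    (hR : OnPlane n R) (hne : P ≠ Q) (h : area P Q R = 0) :
    ∃ t : ℚ, emb R = t • (emb Q - emb P) +ᵥ emb P := by
  have hP' : (P.1 : ℚ) = n - P.2.1 - P.2.2 := by rw [← hP]; push_cast; ring
  have hQ' : (Q.1 : ℚ) = n - Q.2.1 - Q.2.2 := by rw [← hQ]; push_cast; ring
  have hR' : (R.1 : ℚ) = n - R.2.1 - R.2.2 := by rw [← hR]; push_cast; ring
  have h' : ((Q.2.1 : ℚ) - P.2.1) * ((R.2.2 : ℚ) - P.2.2) -
      ((Q.2.2 : ℚ) - P.2.2) * ((R.2.1 : ℚ) - P.2.1) = 0 := by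
    unfold area at h; exact_mod_cast h
  obtain ⟨t, ht1, ht2⟩ : ∃ t : ℚ, (R.2.1 : ℚ) - P.2.1 = t * (Q.2.1 - P.2.1) ∧
      (R.2.2 : ℚ) - P.2.2 = t * (Q.2.2 - P.2.2) := by
    rcases ne_coords hP hQ hne with h0 | h0
    · have h0' : (Q.2.1 : ℚ) - P.2.1 ≠ 0 := by exact_mod_cast h0
      refine ⟨((R.2.1 : ℚ) - P.2.1) / ((Q.2.1 : ℚ) - P.2.1), by field_simp, ?_⟩
      rw [div_mul_eq_mul_div, eq_div_iff h0']
      linear_combination h'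
    · have h0' : (Q.2.2 : ℚ) - P.2.2 ≠ 0 := by exact_mod_cast h0
      refine ⟨((R.2.2 : ℚ) - P.2.2) / ((Q.2.2 : ℚ) - P.2.2), ?_, by field_simp⟩
      rw [div_mul_eq_mul_div, eq_div_iff h0']
      linear_combination -h'
  refine ⟨t, ?_⟩
  ext i
  fin_cases i <;> simp [emb, hP', hQ', hR']
  · linear_combination -ht1 - ht2
  · linear_combination ht1
  · linear_combination ht2

lemma area_of_collinear {P Q R : ℕ × ℕ × ℕ} (h : Collinear ℚ {emb P, emb Q, emb R}) :
    area P Q R = 0 := by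
  rw [collinear_iff_of_mem (p₀ := emb P) (by simp)] at h
  obtain ⟨v, hv⟩ := h
  obtain ⟨s, hs⟩ := hv (emb Q) (by simp)
  obtain ⟨t, ht⟩ := hv (emb R) (by simp)
  have e1 := congrFun hs 1
  have e2 := congrFun hs 2
  have e3 := congrFun ht 1
  have e4 := congrFun ht 2
  simp [emb] at e1 e2 e3 e4
  have : ((area P Q R : ℤ) : ℚ) = 0 := by
    unfold area
    push_cast
    rw [e1, e2, e3, e4]
    ring
  exact_mod_cast this

lemma collinear_of_area {n : ℕ} {P Q R : ℕ × ℕ × ℕ} (hP : OnPlane n P) (hQ : OnPlane n Q)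
    (hR : OnPlane n R) (hne : P ≠ Q) (h : area P Q R = 0) :
    Collinear ℚ {emb P, emb Q, emb R} := by
  rw [collinear_iff_of_mem (p₀ := emb P) (by simp)]
  refine ⟨emb Q - emb P, ?_⟩
  intro p hp
  simp only [Set.mem_insert_iff, Set.mem_singleton_iff] at hp
  rcases hp with rfl | rfl | rfl
  · exact ⟨0, by simp⟩
  · exact ⟨1, by simp⟩
  · exact exists_smul_of_area hP hQ hR hne h

lemma area_self_left (P Q : ℕ × ℕ × ℕ) : area P Q P = 0 := by unfold area; ring
lemma area_self_right (P Q : ℕ × ℕ × ℕ) : area P Q Q = 0 := by unfold area; ring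

/-- The good segments are the traces on `T'` of the lines that join two distinct points of `T'`
and avoid `(n,0,0)`. -/
lemma mem_goodSegments {n : ℕ} {H : Set (ℕ × ℕ × ℕ)} :
    H ∈ goodSegments n ↔ ∃ P ∈ Tprime n, ∃ Q ∈ Tprime n, P ≠ Q ∧ area P Q (n, 0, 0) ≠ 0 ∧
      H = {R | R ∈ Tprime n ∧ area P Q R = 0} := by
  have hA : OnPlane n (n, 0, 0) := by simp [OnPlane]
  constructor
  · rintro ⟨⟨hsub, ⟨P, hP, Q, hQ, hne⟩, hcol, hmax⟩, hgood⟩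
    have hP' := (mem_Tprime.mp (hsub hP)).1
    have hQ' := (mem_Tprime.mp (hsub hQ)).1
    refine ⟨P, hsub hP, Q, hsub hQ, hne, ?_, ?_⟩
    · exact fun h => hgood P hP Q hQ hne (collinear_of_area hP' hQ' hA hne h)
    · ext R
      constructor
      · intro hR
        refine ⟨hsub hR, area_of_collinear (hcol.subset ?_)⟩
        rintro p (rfl | rfl | rfl)
        exacts [⟨P, hP, rfl⟩, ⟨Q, hQ, rfl⟩, ⟨R, hR, rfl⟩]
      · rintro ⟨hR, h⟩
        exact hmax R hR ⟨P, hP, Q, hQ, hne,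
          collinear_of_area hP' hQ' (mem_Tprime.mp hR).1 hne h⟩
  · rintro ⟨P, hP, Q, hQ, hne, hPQ, rfl⟩
    have hP' := (mem_Tprime.mp hP).1
    have hQ' := (mem_Tprime.mp hQ).1
    refine ⟨⟨fun R hR => hR.1, ⟨P, ⟨hP, area_self_left P Q⟩, Q, ⟨hQ, area_self_right P Q⟩, hne⟩,
      ?_, ?_⟩, ?_⟩
    · rw [collinear_iff_of_mem (Set.mem_image_of_mem emb
        (show P ∈ {R | R ∈ Tprime n ∧ area P Q R = 0} from ⟨hP, area_self_left P Q⟩))]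
      refine ⟨emb Q - emb P, ?_⟩
      rintro _ ⟨R, ⟨hR, h⟩, rfl⟩
      exact exists_smul_of_area hP' hQ' (mem_Tprime.mp hR).1 hne h
    · rintro R hR ⟨P₁, hP₁, Q₁, hQ₁, hne₁, hc⟩
      exact ⟨hR, area_trans (mem_Tprime.mp hP₁.1).1 (mem_Tprime.mp hQ₁.1).1 hne₁ hP₁.2 hQ₁.2
        (area_of_collinear hc)⟩
    · intro P₁ hP₁ Q₁ hQ₁ hne₁ hc
      exact hPQ (area_trans (mem_Tprime.mp hP₁.1).1 (mem_Tprime.mp hQ₁.1).1 hne₁ hP₁.2 hQ₁.2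
        (area_of_collinear hc))

/-! ### Counting the codes -/

/-- The pairs `(y, z)` of natural numbers with `y + z < K`. -/
def tri (K : ℕ) : Finset (ℕ × ℕ) :=
  (Finset.range K ×ˢ Finset.range K).filter fun p => p.1 + p.2 < K

lemma mem_tri {K : ℕ} {p : ℕ × ℕ} : p ∈ tri K ↔ p.1 + p.2 < K := by
  simp only [tri, Finset.mem_filter, Finset.mem_product, Finset.mem_range]
  omega

lemma two_mul_bfun (i : ℕ) : 2 * bfun i = i * (i - 1) := by
  unfold bfun
  exact Nat.mul_div_cancel' (Nat.even_mul_pred_self i).two_dvd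

lemma card_tri (K : ℕ) : (tri K).card = bfun (K + 1) := by
  suffices h : 2 * (tri K).card = (K + 1) * K by
    have := two_mul_bfun (K + 1)
    simp only [Nat.add_sub_cancel] at this
    omega
  induction K with
  | zero => simp [tri]
  | succ K ih =>
    have hu : tri (K + 1) = tri K ∪ (Finset.HasAntidiagonal.antidiagonal K) := by
      ext p
      simp only [Finset.mem_union, mem_tri, Finset.HasAntidiagonal.mem_antidiagonal]
      omega
    have hd : Disjoint (tri K) ((Finset.HasAntidiagonal.antidiagonal K)) := by
      rw [Finset.disjoint_left]
      intro p hp hp'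
      rw [mem_tri] at hp
      rw [Finset.HasAntidiagonal.mem_antidiagonal] at hp'
      omega
    rw [hu, Finset.card_union_of_disjoint hd, Finset.Nat.card_antidiagonal, mul_add, ih]
    ring

lemma ncard_Tprime {n : ℕ} (hn : 3 ≤ n) :
    ((Tprime n).ncard : ℚ) = (n + 2) * (n + 1) / 2 - 3 := by
  have himg : Tprime n = (fun p : ℕ × ℕ => (n - p.1 - p.2, p.1, p.2)) ''
      ((tri (n + 1) \ {(0, 0), (n, 0), (0, n)} : Finset (ℕ × ℕ)) : Set (ℕ × ℕ)) := by
    ext ⟨x, y, z⟩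
    simp only [mem_Tprime, OnPlane, Set.mem_image, Finset.mem_coe, Finset.mem_sdiff, mem_tri,
      Finset.mem_insert, Finset.mem_singleton, Prod.exists, Prod.mk.injEq]
    constructor
    · rintro ⟨h, h1, h2, h3⟩
      exact ⟨y, z, by omega, by omega, rfl, rfl⟩
    · rintro ⟨y, z, h, h1, rfl, rfl⟩
      omega
  have hsub : ({(0, 0), (n, 0), (0, n)} : Finset (ℕ × ℕ)) ⊆ tri (n + 1) := by
    intro p hp
    simp only [Finset.mem_insert, Finset.mem_singleton] at hp
    rcases hp with rfl | rfl | rfl <;> simp [mem_tri]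
  have h3 : ({(0, 0), (n, 0), (0, n)} : Finset (ℕ × ℕ)).card = 3 := by
    rw [Finset.card_eq_three]
    exact ⟨_, _, _, by simp; omega, by simp; omega, by simp; omega, rfl⟩
  rw [himg, Set.ncard_image_of_injective, Set.ncard_coe_finset, Finset.card_sdiff_of_subset hsub,
    Nat.cast_sub (Finset.card_le_card hsub), h3, card_tri]
  · have := two_mul_bfun (n + 1 + 1)
    simp only [Nat.add_sub_cancel] at this
    have h' : (2 : ℚ) * bfun (n + 1 + 1) = (n + 1 + 1) * (n + 1) := by exact_mod_cast this
    push_cast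
    linear_combination h' / 2
  · rintro ⟨y, z⟩ ⟨y', z'⟩ h
    simp only [Prod.mk.injEq] at h ⊢
    exact h.2

/-- The condition on the rotation `s` and the step `j` under which a line ending, in rotated
coordinates, at the vertex `(n,0,0)` still yields a good segment. -/
def ok (n : ℕ) (s : Fin 3) (j : ℕ) : Prop :=
  match s with
  | 0 => False
  | 1 => 2 ≤ j ∧ 2 * j ≤ n
  | 2 => 2 * j ≤ n

instance (n : ℕ) (s : Fin 3) (j : ℕ) : Decidable (ok n s j) := by
  unfold ok
  split <;> infer_instance

/-- The last two coordinates of the admissible endpoints of lines with direction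
`(j, -a, -(j - a))`. -/
def ends (n : ℕ) (s : Fin 3) (j a : ℕ) : Finset (ℕ × ℕ) :=
  (tri (n + 1 - j)).filter fun p => ¬ (a ≤ p.1 ∧ j - a ≤ p.2) ∧ (p = (0, 0) → ok n s j)

lemma mem_ends {n : ℕ} {s : Fin 3} {j a : ℕ} (hj : j ≤ n) {p : ℕ × ℕ} :
    p ∈ ends n s j a ↔ p.1 + p.2 + j ≤ n ∧ ¬ (a ≤ p.1 ∧ j - a ≤ p.2) ∧
      (p = (0, 0) → ok n s j) := by
  rw [ends, Finset.mem_filter, mem_tri]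
  have : p.1 + p.2 < n + 1 - j ↔ p.1 + p.2 + j ≤ n := by omega
  rw [this]

/-- Among the `(y, z)` with `y + z ≤ n - j`, the non-terminal ones form a translate of the
triangle `y + z ≤ n - 2j`. -/
lemma card_ends {n : ℕ} {s : Fin 3} {j a : ℕ} (hj : j ≤ n) (ha : a < j) :
    ((ends n s j a).card : ℚ) =
      ((bfun (n + 1 - j + 1) - bfun (n + 1 - 2 * j + 1) : ℕ) : ℚ) - if ok n s j then 0 else 1 := by
  set U := (tri (n + 1 - j)).filter fun p => ¬ (a ≤ p.1 ∧ j - a ≤ p.2) with hU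
  have hUc : U.card = bfun (n + 1 - j + 1) - bfun (n + 1 - 2 * j + 1) := by
    have himg : (tri (n + 1 - j)).filter (fun p => a ≤ p.1 ∧ j - a ≤ p.2) =
        (tri (n + 1 - 2 * j)).image fun p => (p.1 + a, p.2 + (j - a)) := by
      ext ⟨y, z⟩
      simp only [Finset.mem_filter, mem_tri, Finset.mem_image, Prod.exists, Prod.mk.injEq]
      constructor
      · rintro ⟨h, h1, h2⟩
        exact ⟨y - a, z - (j - a), by omega, by omega, by omega⟩
      · rintro ⟨y, z, h, rfl, rfl⟩
        omega
    have hc := Finset.card_filter_add_card_filter_not (s := tri (n + 1 - j))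
      (fun p => a ≤ p.1 ∧ j - a ≤ p.2)
    rw [himg, Finset.card_image_of_injective, card_tri, card_tri] at hc
    · rw [hU]; omega
    · rintro ⟨y, z⟩ ⟨y', z'⟩ h
      simp only [Prod.mk.injEq] at h ⊢
      omega
  have h0 : (0, 0) ∈ U := by
    simp only [hU, Finset.mem_filter, mem_tri]
    omega
  rw [← hUc]
  split_ifs with h
  · have : ends n s j a = U := by
      simp [ends, hU, h]
    rw [this]; simp
  · have : ends n s j a = U.erase (0, 0) := by
      ext p
      simp only [ends, hU, h, Finset.mem_filter, Finset.mem_erase]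
      tauto
    rw [this, Finset.card_erase_of_mem h0, Nat.cast_sub (Finset.card_pos.mpr ⟨_, h0⟩)]
    simp

/-- The codes `(s, j, a, (y, z))` of the good segments. -/
def codes (n : ℕ) : Finset (Σ _ : Fin 3, Σ _ : ℕ, Σ _ : ℕ, ℕ × ℕ) :=
  Finset.univ.sigma fun s => (Finset.Icc 1 n).sigma fun j =>
    ((Finset.range j).filter fun a => j.Coprime a).sigma fun a => ends n s j a

lemma card_codes {n : ℕ} (hn : 3 ≤ n) :
    ((codes n).card : ℚ) =
      (alphafun (n + 1) : ℚ) - ∑ i ∈ Finset.Icc 2 n, (Nat.totient i : ℚ) -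
        2 * ∑ i ∈ Finset.Icc (n / 2 + 1) n, (Nat.totient i : ℚ) - 2 := by
  have h1 : ((codes n).card : ℚ) = ∑ s : Fin 3, ∑ j ∈ Finset.Icc 1 n, (Nat.totient j : ℚ) *
      (((bfun (n + 1 - j + 1) - bfun (n + 1 - 2 * j + 1) : ℕ) : ℚ) -
        if ok n s j then 0 else 1) := by
    simp only [codes, Finset.card_sigma]
    push_cast
    refine Finset.sum_congr rfl fun s _ => Finset.sum_congr rfl fun j hj => ?_
    rw [Finset.mem_Icc] at hj
    rw [Nat.totient, ← nsmul_eq_mul]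
    refine Finset.sum_eq_card_nsmul fun a ha => ?_
    rw [Finset.mem_filter, Finset.mem_range] at ha
    exact card_ends hj.2 ha.1
  have h2 : ∑ i ∈ Finset.Icc 1 n, (Nat.totient i : ℚ) =
      1 + ∑ i ∈ Finset.Icc 2 n, (Nat.totient i : ℚ) := by
    rw [← Finset.add_sum_Ioc_eq_sum_Icc (show 1 ≤ n by omega), Nat.totient_one, Nat.cast_one]
    rfl
  have h3 : ∑ i ∈ Finset.Icc 1 n, (Nat.totient i : ℚ) * (if 2 * i ≤ n then 0 else 1) =
      ∑ i ∈ Finset.Icc (n / 2 + 1) n, (Nat.totient i : ℚ) := by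
    have : Finset.Icc (n / 2 + 1) n = (Finset.Icc 1 n).filter fun i => ¬ 2 * i ≤ n := by
      ext i
      simp only [Finset.mem_filter, Finset.mem_Icc]
      omega
    rw [this, Finset.sum_filter]
    refine Finset.sum_congr rfl fun i _ => ?_
    split_ifs <;> simp
  have h4 : ∑ i ∈ Finset.Icc 1 n, (Nat.totient i : ℚ) * (if 2 ≤ i ∧ 2 * i ≤ n then 0 else 1) =
      1 + ∑ i ∈ Finset.Icc 1 n, (Nat.totient i : ℚ) * (if 2 * i ≤ n then 0 else 1) := by
    have : ∀ i ∈ Finset.Icc 1 n, (Nat.totient i : ℚ) * (if 2 ≤ i ∧ 2 * i ≤ n then 0 else 1) =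
        (if i = 1 then 1 else 0) + (Nat.totient i : ℚ) * (if 2 * i ≤ n then 0 else 1) := by
      intro i hi
      rw [Finset.mem_Icc] at hi
      by_cases h : i = 1
      · subst h
        simp
        omega
      · have : 2 ≤ i := by omega
        simp [h, this]
    rw [Finset.sum_congr rfl this, Finset.sum_add_distrib, Finset.sum_ite_eq']
    rw [if_pos (by rw [Finset.mem_Icc]; omega)]
  -- `ok n s j` unfolds to a different condition for each of the three rotations.
  have e0 : ∑ j ∈ Finset.Icc 1 n, (Nat.totient j : ℚ) * (if ok n 0 j then 0 else 1) =
      ∑ j ∈ Finset.Icc 1 n, (Nat.totient j : ℚ) :=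
    Finset.sum_congr rfl fun j _ => by rw [if_neg (fun h : ok n 0 j => h), mul_one]
  have e1 : ∑ j ∈ Finset.Icc 1 n, (Nat.totient j : ℚ) * (if ok n 1 j then 0 else 1) =
      ∑ j ∈ Finset.Icc 1 n, (Nat.totient j : ℚ) * (if 2 ≤ j ∧ 2 * j ≤ n then 0 else 1) :=
    Finset.sum_congr rfl fun j _ => congrArg _ (if_congr Iff.rfl rfl rfl)
  have e2 : ∑ j ∈ Finset.Icc 1 n, (Nat.totient j : ℚ) * (if ok n 2 j then 0 else 1) =
      ∑ j ∈ Finset.Icc 1 n, (Nat.totient j : ℚ) * (if 2 * j ≤ n then 0 else 1) :=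
    Finset.sum_congr rfl fun j _ => congrArg _ (if_congr Iff.rfl rfl rfl)
  rw [h1, Fin.sum_univ_three]
  simp only [mul_sub, Finset.sum_sub_distrib, e0, e1, e2]
  rw [h4, h3, h2, alphafun, Nat.add_sub_cancel]
  push_cast
  ring

/-! ### Lines with a given direction and endpoint -/

/-- The cyclic rotation of the coordinates by `s` places. -/
def rot (s : Fin 3) (R : ℕ × ℕ × ℕ) : ℕ × ℕ × ℕ :=
  match s with
  | 0 => R
  | 1 => (R.2.1, R.2.2, R.1)
  | 2 => (R.2.2, R.1, R.2.1)

lemma onPlane_rot {n : ℕ} {s : Fin 3} {R : ℕ × ℕ × ℕ} : OnPlane n (rot s R) ↔ OnPlane n R := by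
  fin_cases s <;> simp only [rot, OnPlane] <;> omega

lemma rot_mem {n : ℕ} {s : Fin 3} {R : ℕ × ℕ × ℕ} : rot s R ∈ Tprime n ↔ R ∈ Tprime n := by
  fin_cases s <;> simp only [rot, mem_Tprime, OnPlane] <;> omega

lemma rot_injective (s : Fin 3) : Function.Injective (rot s) := by
  rintro ⟨x, y, z⟩ ⟨x', y', z'⟩ h
  fin_cases s <;> simp only [rot, Prod.mk.injEq] at h ⊢ <;> omega

lemma rot_surjective (s : Fin 3) : Function.Surjective (rot s) := by
  rintro ⟨x, y, z⟩
  fin_cases s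
  exacts [⟨(x, y, z), rfl⟩, ⟨(z, x, y), rfl⟩, ⟨(y, z, x), rfl⟩]

/-- On the plane `i + j + k = n`, the area may be computed in any two cyclically consecutive
coordinates. -/
lemma area_rot {n : ℕ} {s : Fin 3} {P Q R : ℕ × ℕ × ℕ} (hP : OnPlane n P) (hQ : OnPlane n Q)
    (hR : OnPlane n R) : area (rot s P) (rot s Q) (rot s R) = area P Q R := by
  have hP' : (P.1 : ℤ) = n - P.2.1 - P.2.2 := by rw [← hP]; push_cast; ring
  have hQ' : (Q.1 : ℤ) = n - Q.2.1 - Q.2.2 := by rw [← hQ]; push_cast; ring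
  have hR' : (R.1 : ℤ) = n - R.2.1 - R.2.2 := by rw [← hR]; push_cast; ring
  fin_cases s <;> simp only [rot, area, hP', hQ', hR'] <;> ring

/-- `R = E - k • (a + b, -a, -b)` for some `k : ℕ`. -/
def OnLine (a b : ℕ) (E R : ℕ × ℕ × ℕ) : Prop :=
  ∃ k : ℕ, R.1 + k * (a + b) = E.1 ∧ R.2.1 = E.2.1 + k * a ∧ R.2.2 = E.2.2 + k * b

/-- `(a + b, -a, -b)` is a primitive direction, `E` and `E - (a + b, -a, -b)` are lattice points of
the triangle, and `E + (a + b, -a, -b)` is not. -/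
structure LineData (n a b : ℕ) (E : ℕ × ℕ × ℕ) : Prop where
  pos : 1 ≤ b
  coprime : a.Coprime b
  plane : OnPlane n E
  prev : a + b ≤ E.1
  last : ¬ (a ≤ E.2.1 ∧ b ≤ E.2.2)

lemma area_eq_zero_iff {n a b : ℕ} {E P Q R : ℕ × ℕ × ℕ} (hL : LineData n a b E)
    (hP : OnLine a b E P) (hQ : OnLine a b E Q) (hne : P ≠ Q) (hR : OnPlane n R) :
    area P Q R = 0 ↔ OnLine a b E R := by
  obtain ⟨hb, hab, hE, -, hlast⟩ := hL
  obtain ⟨k, hk1, hk2, hk3⟩ := hP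
  obtain ⟨l, hl1, hl2, hl3⟩ := hQ
  have hkl : (l : ℤ) - k ≠ 0 := by
    intro h
    have h : l = k := by omega
    subst h
    apply hne
    ext <;> omega
  have hfac : area P Q R =
      ((l : ℤ) - k) * (a * ((R.2.2 : ℤ) - E.2.2) - b * ((R.2.1 : ℤ) - E.2.1)) := by
    unfold area
    rw [hk2, hk3, hl2, hl3]
    push_cast
    ring
  rw [hfac, mul_eq_zero, or_iff_right hkl]
  constructor
  · intro h
    have hdvd : (b : ℤ) ∣ (R.2.2 : ℤ) - E.2.2 := by
      refine IsCoprime.dvd_of_dvd_mul_left (Nat.isCoprime_iff_coprime.mpr hab).symm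
        ⟨(R.2.1 : ℤ) - E.2.1, ?_⟩
      linarith
    obtain ⟨m, hm⟩ := hdvd
    have hb0 : (b : ℤ) ≠ 0 := by omega
    have hm' : (R.2.1 : ℤ) - E.2.1 = a * m := by
      apply mul_left_cancel₀ hb0
      rw [hm] at h
      linarith
    have hm0 : 0 ≤ m := by
      by_contra hneg
      have hneg : m ≤ -1 := by omega
      apply hlast
      constructor
      · have : (a : ℤ) * m ≤ a * (-1) := by gcongr
        omega
      · have : (b : ℤ) * m ≤ b * (-1) := by gcongr
        omega
    lift m to ℕ using hm0
    have e2 : R.2.1 = E.2.1 + m * a := by zify; linarith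
    have e3 : R.2.2 = E.2.2 + m * b := by zify; linarith
    refine ⟨m, ?_, e2, e3⟩
    unfold OnPlane at hR hE
    rw [mul_add]
    omega
  · rintro ⟨m, -, h2, h3⟩
    rw [h2, h3]
    push_cast
    ring

/-- The trace on `T'` of the line that, after rotation by `s`, ends at `E` with direction
`(a + b, -a, -b)`. -/
def seg (n : ℕ) (s : Fin 3) (a b : ℕ) (E : ℕ × ℕ × ℕ) : Set (ℕ × ℕ × ℕ) :=
  {R | R ∈ Tprime n ∧ OnLine a b E (rot s R)}

lemma seg_eq {n a b : ℕ} {s : Fin 3} {E P Q : ℕ × ℕ × ℕ} (hL : LineData n a b E)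
    (hP : P ∈ Tprime n) (hQ : Q ∈ Tprime n) (hne : P ≠ Q)
    (hP' : OnLine a b E (rot s P)) (hQ' : OnLine a b E (rot s Q)) :
    seg n s a b E = {R | R ∈ Tprime n ∧ area P Q R = 0} := by
  ext R
  refine and_congr_right fun hR => ?_
  have hR' := (mem_Tprime.mp hR).1
  rw [← area_rot (s := s) (mem_Tprime.mp hP).1 (mem_Tprime.mp hQ).1 hR']
  exact (area_eq_zero_iff hL hP' hQ' ((rot_injective s).ne hne) (onPlane_rot.mpr hR')).symm

/-- A line with an admissible endpoint meets `T'` in two points: when the endpoint is a vertex,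
`2 (a + b) ≤ n` leaves room for two more lattice points. -/
lemma exists_two_points {n a b : ℕ} {s : Fin 3} {E : ℕ × ℕ × ℕ} (hn : 3 ≤ n)
    (hL : LineData n a b E) (hok : E = (n, 0, 0) → ok n s (a + b)) :
    ∃ P ∈ Tprime n, ∃ Q ∈ Tprime n, P ≠ Q ∧ OnLine a b E P ∧ OnLine a b E Q := by
  obtain ⟨hb, hab, hE, hprev, hlast⟩ := hL
  -- The direction `(b, 0, -b)` is primitive only for `b = 1`.
  have hb1 : a = 0 → b = 1 := by
    rintro rfl
    simpa using hab
  obtain ⟨x, y, z⟩ := E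
  simp only [OnPlane] at hE hprev hlast
  by_cases h : x = n
  · have hy : y = 0 := by omega
    have hz : z = 0 := by omega
    subst hy hz h
    have h2 : 2 * (a + b) ≤ x := by
      have := hok rfl
      fin_cases s
      exacts [this.elim, this.2, this]
    refine ⟨(x - (a + b), a, b), ?_, (x - 2 * (a + b), 2 * a, 2 * b), ?_, ?_, ⟨1, ?_⟩, ⟨2, ?_⟩⟩
    · simp only [mem_Tprime, OnPlane]; omega
    · simp only [mem_Tprime, OnPlane]; omega
    · simp only [ne_eq, Prod.mk.injEq]; omega
    · simp only; omega
    · simp only; omega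
  · refine ⟨(x, y, z), ?_, (x - (a + b), y + a, z + b), ?_, ?_, ⟨0, ?_⟩, ⟨1, ?_⟩⟩
    · simp only [mem_Tprime, OnPlane]; omega
    · simp only [mem_Tprime, OnPlane]; omega
    · simp only [ne_eq, Prod.mk.injEq]; omega
    · simp only; omega
    · simp only; omega

/-- A line with an admissible endpoint avoids `(n,0,0)`, whose rotations are the vertices
`(n,0,0)`, `(0,0,n)` and `(0,n,0)`; it could only reach them at its endpoint or along an edge. -/
lemma not_onLine_vertex {n a b : ℕ} {s : Fin 3} {E : ℕ × ℕ × ℕ}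
    (hL : LineData n a b E) (hok : E = (n, 0, 0) → ok n s (a + b)) :
    ¬ OnLine a b E (rot s (n, 0, 0)) := by
  obtain ⟨hb, hab, hE, hprev, hlast⟩ := hL
  obtain ⟨x, y, z⟩ := E
  simp only [OnPlane] at hE hprev hlast
  rintro ⟨k, hk1, hk2, hk3⟩
  fin_cases s
  · simp only [rot] at hk1 hk2 hk3
    exact hok (by simp only [Prod.mk.injEq]; omega)
  · simp only [rot] at hk1 hk2 hk3
    have hk : k ≠ 0 := by
      rintro rfl
      omega
    have ha : a = 0 := by
      have : k * a = 0 := by omega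
      exact (mul_eq_zero.mp this).resolve_left hk
    subst ha
    have hb1 : b = 1 := by simpa using hab
    subst hb1
    have := (hok (by simp only [Prod.mk.injEq]; omega)).1
    omega
  · simp only [rot] at hk1 hk2 hk3
    have hk : k = 0 := by
      have : k * b = 0 := by omega
      exact (mul_eq_zero.mp this).resolve_right (by omega)
    subst hk
    omega

lemma seg_mem_goodSegments {n a b : ℕ} {s : Fin 3} {E : ℕ × ℕ × ℕ} (hn : 3 ≤ n)
    (hL : LineData n a b E) (hok : E = (n, 0, 0) → ok n s (a + b)) :
    seg n s a b E ∈ goodSegments n := by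
  obtain ⟨P', hP, Q', hQ, hne, hP', hQ'⟩ := exists_two_points hn hL hok
  obtain ⟨P, rfl⟩ := rot_surjective s P'
  obtain ⟨Q, rfl⟩ := rot_surjective s Q'
  have hA : OnPlane n (n, 0, 0) := by simp [OnPlane]
  rw [rot_mem] at hP hQ
  refine mem_goodSegments.mpr ⟨P, hP, Q, hQ, fun h => hne (congrArg _ h), fun h => ?_,
    seg_eq hL hP hQ (fun h => hne (congrArg _ h)) hP' hQ'⟩
  rw [← area_rot (s := s) (mem_Tprime.mp hP).1 (mem_Tprime.mp hQ).1 hA] at h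
  exact not_onLine_vertex hL hok
    ((area_eq_zero_iff hL hP' hQ' hne (onPlane_rot.mpr hA)).mp h)

/-- Two points whose difference has sign pattern `(+, ≤ 0, -)` lie on a line with direction
`(a + b, -a, -b)`; its endpoint is reached from `Q` by taking as many steps as possible. -/
lemma exists_lineData {n : ℕ} {P Q : ℕ × ℕ × ℕ} (hP : OnPlane n P) (hQ : OnPlane n Q)
    (h2 : Q.2.1 ≤ P.2.1) (h3 : Q.2.2 < P.2.2) :
    ∃ a b E, LineData n a b E ∧ OnLine a b E P ∧ OnLine a b E Q := by
  obtain ⟨x, y, z⟩ := P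
  obtain ⟨x', y', z'⟩ := Q
  simp only [OnPlane] at hP hQ h2 h3
  obtain ⟨u, rfl⟩ := Nat.exists_eq_add_of_le h2
  obtain ⟨v, rfl⟩ := Nat.exists_eq_add_of_lt h3
  obtain ⟨g, a, b, hg, hab, hu, hv⟩ := Nat.exists_coprime' (m := u) (n := v + 1)
    (Nat.gcd_pos_of_pos_right _ (by omega))
  have hb : 1 ≤ b := by
    rcases Nat.eq_zero_or_pos b with rfl | h
    · omega
    · exact h
  have hex : ∃ k, ¬ ((k + 1) * a ≤ y' ∧ (k + 1) * b ≤ z') := by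
    refine ⟨z', fun h => ?_⟩
    have := Nat.le_mul_of_pos_right (z' + 1) hb
    omega
  classical
  set k := Nat.find hex with hk
  have hlast := Nat.find_spec hex
  rw [← hk] at hlast
  have hin : k * a ≤ y' ∧ k * b ≤ z' := by
    rcases Nat.eq_zero_or_pos k with h | h
    · simp [h]
    · have := Nat.find_min hex (m := k - 1) (by omega)
      rwa [not_not, Nat.sub_add_cancel h] at this
  have hgab : a + b ≤ g * a + g * b := by
    rw [← mul_add]; exact Nat.le_mul_of_pos_left _ hg
  rw [add_mul, add_mul, one_mul, one_mul] at hlast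
  rw [mul_comm] at hu hv
  refine ⟨a, b, (x' + k * a + k * b, y' - k * a, z' - k * b), ⟨hb, hab, ?_, ?_, ?_⟩,
    ⟨k + g, ?_, ?_, ?_⟩, ⟨k, ?_, ?_, ?_⟩⟩ <;> simp only [OnPlane, add_mul, mul_add] <;> omega

/-- Up to exchanging `P` and `Q`, some rotation brings `Q - P` to the sign pattern
`(+, ≤ 0, -)`. -/
lemma exists_rot_sign {n : ℕ} {P Q : ℕ × ℕ × ℕ} (hP : OnPlane n P) (hQ : OnPlane n Q)
    (hne : P ≠ Q) : ∃ s : Fin 3,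
      ((rot s Q).2.1 ≤ (rot s P).2.1 ∧ (rot s Q).2.2 < (rot s P).2.2) ∨
      ((rot s P).2.1 ≤ (rot s Q).2.1 ∧ (rot s P).2.2 < (rot s Q).2.2) := by
  obtain ⟨x, y, z⟩ := P
  obtain ⟨x', y', z'⟩ := Q
  simp only [OnPlane, ne_eq, Prod.mk.injEq] at hP hQ hne
  by_contra! h
  have h0 := h 0
  have h1 := h 1
  have h2 := h 2
  simp only [rot] at h0 h1 h2
  omega

/-- A line through two points of `T'` that avoids `(n,0,0)` can only end at a vertex under the
condition `ok`: otherwise it has a single point in `T'`, or it is the edge through `(n,0,0)`. -/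
lemma ok_of_points {n a b : ℕ} {s : Fin 3} {P Q : ℕ × ℕ × ℕ} (hL : LineData n a b (n, 0, 0))
    (hP : rot s P ∈ Tprime n) (hQ : rot s Q ∈ Tprime n) (hne : P ≠ Q)
    (hP' : OnLine a b (n, 0, 0) (rot s P)) (hQ' : OnLine a b (n, 0, 0) (rot s Q))
    (hA : ¬ OnLine a b (n, 0, 0) (rot s (n, 0, 0))) : ok n s (a + b) := by
  have h2 : 2 * (a + b) ≤ n := by
    by_contra hlt
    have key : ∀ R ∈ Tprime n, OnLine a b (n, 0, 0) R → R = (n - (a + b), a, b) := by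
      rintro ⟨x, y, z⟩ hR ⟨k, hk1, hk2, hk3⟩
      simp only [mem_Tprime, OnPlane] at hR hk1 hk2 hk3
      have hk : k = 1 := by
        have h0 : k ≠ 0 := by
          rintro rfl
          omega
        have h2 : ¬ 2 ≤ k := fun h => by
          have := Nat.mul_le_mul_right (a + b) h
          omega
        omega
      subst hk
      simp only [Prod.mk.injEq]
      omega
    exact hne (rot_injective s ((key _ hP hP').trans (key _ hQ hQ').symm))
  have hb := hL.pos
  fin_cases s
  · exact hA ⟨0, by simp [rot]⟩
  · refine ⟨?_, h2⟩
    by_contra hlt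
    have ha : a = 0 := by omega
    have hb1 : b = 1 := by omega
    subst ha hb1
    exact hA ⟨n, by simp [rot]⟩
  · exact h2

lemma exists_seg {n : ℕ} {H : Set (ℕ × ℕ × ℕ)} (hH : H ∈ goodSegments n) :
    ∃ s a b E, LineData n a b E ∧ (E = (n, 0, 0) → ok n s (a + b)) ∧ seg n s a b E = H := by
  obtain ⟨P, hP, Q, hQ, hne, hA, rfl⟩ := mem_goodSegments.mp hH
  have hP1 := (mem_Tprime.mp hP).1
  have hQ1 := (mem_Tprime.mp hQ).1
  have hA1 : OnPlane n (n, 0, 0) := by simp [OnPlane]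
  obtain ⟨s, hs⟩ := exists_rot_sign hP1 hQ1 hne
  obtain ⟨a, b, E, hL, hP', hQ'⟩ : ∃ a b E, LineData n a b E ∧ OnLine a b E (rot s P) ∧
      OnLine a b E (rot s Q) := by
    rcases hs with ⟨h1, h2⟩ | ⟨h1, h2⟩
    · exact exists_lineData (onPlane_rot.mpr hP1) (onPlane_rot.mpr hQ1) h1 h2
    · obtain ⟨a, b, E, hL, hQ', hP'⟩ :=
        exists_lineData (onPlane_rot.mpr hQ1) (onPlane_rot.mpr hP1) h1 h2
      exact ⟨a, b, E, hL, hP', hQ'⟩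
  refine ⟨s, a, b, E, hL, ?_, seg_eq hL hP hQ hne hP' hQ'⟩
  rintro rfl
  refine ok_of_points hL (rot_mem.mpr hP) (rot_mem.mpr hQ) hne hP' hQ' fun h => hA ?_
  rw [← area_rot (s := s) hP1 hQ1 hA1]
  exact (area_eq_zero_iff hL hP' hQ' ((rot_injective s).ne hne) (onPlane_rot.mpr hA1)).mpr h

/-- The difference of two points of a line is an integer multiple of the direction. -/
lemma OnLine.diff {a b : ℕ} {E P Q : ℕ × ℕ × ℕ} (hP : OnLine a b E P) (hQ : OnLine a b E Q) :
    ∃ m : ℤ, (Q.1 : ℤ) - P.1 = m * (a + b) ∧ (P.2.1 : ℤ) - Q.2.1 = m * a ∧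
      (P.2.2 : ℤ) - Q.2.2 = m * b := by
  obtain ⟨k, hk1, hk2, hk3⟩ := hP
  obtain ⟨l, hl1, hl2, hl3⟩ := hQ
  zify at *
  exact ⟨k - l, by linarith, by linarith, by linarith⟩

/-- The rotation is determined by the sign pattern `(+, ≤ 0, -)` of the direction. -/
lemma rot_unique {n a b a' b' : ℕ} {s s' : Fin 3} {E E' P Q : ℕ × ℕ × ℕ}
    (hb : 1 ≤ b) (hb' : 1 ≤ b') (hPp : OnPlane n P) (hQp : OnPlane n Q) (hne : P ≠ Q)
    (hP : OnLine a b E (rot s P)) (hQ : OnLine a b E (rot s Q))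
    (hP' : OnLine a' b' E' (rot s' P)) (hQ' : OnLine a' b' E' (rot s' Q)) : s = s' := by
  have key : ∀ {a b : ℕ} {E P Q : ℕ × ℕ × ℕ}, 1 ≤ b → OnLine a b E P → OnLine a b E Q → P ≠ Q →
      (P.1 < Q.1 ∧ Q.2.1 ≤ P.2.1 ∧ Q.2.2 < P.2.2) ∨
      (Q.1 < P.1 ∧ P.2.1 ≤ Q.2.1 ∧ P.2.2 < Q.2.2) := by
    rintro a b E ⟨x, y, z⟩ ⟨x', y', z'⟩ hb hP hQ hne
    obtain ⟨m, h1, h2, h3⟩ := hP.diff hQ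
    simp only [ne_eq, Prod.mk.injEq] at *
    rcases lt_trichotomy m 0 with hm | rfl | hm
    · right
      have e1 : m * (a + b) < 0 := mul_neg_of_neg_of_pos hm (by omega)
      have e2 : m * a ≤ 0 := mul_nonpos_of_nonpos_of_nonneg hm.le (by omega)
      have e3 : m * b < 0 := mul_neg_of_neg_of_pos hm (by omega)
      omega
    · simp only [zero_mul] at h1 h2 h3
      omega
    · left
      have e1 : 0 < m * (a + b) := mul_pos hm (by omega)
      have e2 : 0 ≤ m * a := mul_nonneg hm.le (by omega)
      have e3 : 0 < m * b := mul_pos hm (by omega)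
      omega
  have h1 := key hb hP hQ ((rot_injective s).ne hne)
  have h2 := key hb' hP' hQ' ((rot_injective s').ne hne)
  unfold OnPlane at hPp hQp
  fin_cases s <;> fin_cases s' <;> first | rfl | (exfalso; simp only [rot] at h1 h2; omega)

/-- Two coprime pairs of naturals that are proportional are equal. -/
lemma coprime_unique {a b a' b' : ℕ} (hb : 1 ≤ b) (h : a.Coprime b) (h' : a'.Coprime b')
    (he : a * b' = a' * b) : a = a' ∧ b = b' := by
  have h1 : b ∣ b' := h.symm.dvd_of_dvd_mul_left ⟨a', by rw [he, mul_comm]⟩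
  have h2 : b' ∣ b := h'.symm.dvd_of_dvd_mul_left ⟨a, by rw [← he, mul_comm]⟩
  have hbb := Nat.dvd_antisymm h1 h2
  subst hbb
  exact ⟨Nat.eq_of_mul_eq_mul_right hb he, rfl⟩

lemma end_unique {n a b : ℕ} {E E' P : ℕ × ℕ × ℕ} (hL : LineData n a b E)
    (hL' : LineData n a b E') (hP : OnLine a b E P) (hP' : OnLine a b E' P) : E = E' := by
  obtain ⟨k, hk1, hk2, hk3⟩ := hP
  obtain ⟨l, hl1, hl2, hl3⟩ := hP'
  have hlast := hL.last
  -- The endpoint reached later would leave room for one more step from the other one.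
  have key : ∀ {E E' : ℕ × ℕ × ℕ} {k l : ℕ}, ¬ (a ≤ E.2.1 ∧ b ≤ E.2.2) → k < l →
      P.2.1 = E.2.1 + k * a → P.2.2 = E.2.2 + k * b →
      P.2.1 = E'.2.1 + l * a → P.2.2 = E'.2.2 + l * b → False := by
    intro E E' k l hE hkl h1 h2 h3 h4
    have e1 := Nat.mul_le_mul_right a (Nat.succ_le_of_lt hkl)
    have e2 := Nat.mul_le_mul_right b (Nat.succ_le_of_lt hkl)
    rw [Nat.succ_mul] at e1 e2
    omega
  rcases lt_trichotomy k l with h | rfl | h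
  · exact (key hlast h hk2 hk3 hl2 hl3).elim
  · ext <;> omega
  · exact (key hL'.last h hl2 hl3 hk2 hk3).elim

lemma seg_injective {n a b a' b' : ℕ} {s s' : Fin 3} {E E' : ℕ × ℕ × ℕ} (hn : 3 ≤ n)
    (hL : LineData n a b E) (hok : E = (n, 0, 0) → ok n s (a + b))
    (hL' : LineData n a' b' E') (h : seg n s a b E = seg n s' a' b' E') :
    s = s' ∧ a = a' ∧ b = b' ∧ E = E' := by
  obtain ⟨P₁, hP, Q₁, hQ, hne, hP₁, hQ₁⟩ := exists_two_points hn hL hok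
  obtain ⟨P, rfl⟩ := rot_surjective s P₁
  obtain ⟨Q, rfl⟩ := rot_surjective s Q₁
  rw [rot_mem] at hP hQ
  have hne' : P ≠ Q := fun h => hne (congrArg _ h)
  have hPm : P ∈ seg n s' a' b' E' := h ▸ (show P ∈ seg n s a b E from ⟨hP, hP₁⟩)
  have hQm : Q ∈ seg n s' a' b' E' := h ▸ (show Q ∈ seg n s a b E from ⟨hQ, hQ₁⟩)
  have hP₂ := hPm.2
  have hQ₂ := hQm.2
  have hs := rot_unique hL.pos hL'.pos (mem_Tprime.mp hP).1 (mem_Tprime.mp hQ).1 hne' hP₁ hQ₁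
    hP₂ hQ₂
  subst hs
  have hab : a * b' = a' * b := by
    obtain ⟨m, h1, h2, h3⟩ := hP₁.diff hQ₁
    obtain ⟨m', h1', h2', h3'⟩ := hP₂.diff hQ₂
    have hm : m ≠ 0 := by
      rintro rfl
      simp only [zero_mul] at h1 h2 h3
      apply hne
      ext <;> omega
    have e2 : m * a = m' * a' := h2.symm.trans h2'
    have e3 : m * b = m' * b' := h3.symm.trans h3'
    have : (a * b' : ℤ) = a' * b := by
      apply mul_left_cancel₀ hm
      have hm' : m' ≠ 0 := by
        rintro rfl
        have := hL.pos
        rw [zero_mul, mul_eq_zero, or_iff_right hm] at e3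
        omega
      apply mul_left_cancel₀ hm'
      linear_combination (m' * b') * e2 - (m' * a') * e3
    exact_mod_cast this
  obtain ⟨rfl, rfl⟩ := coprime_unique hL.pos hL.coprime hL'.coprime hab
  exact ⟨rfl, rfl, rfl, end_unique hL hL' hP₁ hP₂⟩

lemma mem_codes {n : ℕ} {c : Σ _ : Fin 3, Σ _ : ℕ, Σ _ : ℕ, ℕ × ℕ} :
    c ∈ codes n ↔ c.2.2.1 < c.2.1 ∧
      LineData n c.2.2.1 (c.2.1 - c.2.2.1) (n - c.2.2.2.1 - c.2.2.2.2, c.2.2.2) ∧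
      ((n - c.2.2.2.1 - c.2.2.2.2, c.2.2.2) = (n, 0, 0) → ok n c.1 c.2.1) := by
  obtain ⟨s, j, a, y, z⟩ := c
  simp only [codes, Finset.mem_sigma, Finset.mem_univ, true_and, Finset.mem_Icc,
    Finset.mem_filter, Finset.mem_range]
  have hco : a < j → (j.Coprime a ↔ a.Coprime (j - a)) := fun h => by
    rw [Nat.coprime_comm, Nat.coprime_sub_self_right h.le]
  constructor
  · rintro ⟨⟨-, hj⟩, ⟨ha, hc⟩, hp⟩
    obtain ⟨h1, h2, h3⟩ := (mem_ends hj).mp hp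
    simp only at h1 h2
    refine ⟨ha, ⟨by omega, (hco ha).mp hc, ?_, ?_, h2⟩, fun h => h3 (congrArg Prod.snd h)⟩
    · simp only [OnPlane]; omega
    · simp only; omega
  · rintro ⟨ha, ⟨h1, h2, h3, h4, h5⟩, h6⟩
    simp only [OnPlane] at h3 h4 h5
    have hj : j ≤ n := by omega
    refine ⟨⟨by omega, hj⟩, ⟨ha, (hco ha).mpr h2⟩, (mem_ends hj).mpr ⟨?_, h5, fun h => h6 ?_⟩⟩
    · simp only; omega
    · rw [h]
      simp only [Prod.mk.injEq] at h
      simp only [h.1, h.2, Nat.sub_zero]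

lemma ncard_goodSegments {n : ℕ} (hn : 3 ≤ n) : (goodSegments n).ncard = (codes n).card := by
  have himg : goodSegments n = (fun c : Σ _ : Fin 3, Σ _ : ℕ, Σ _ : ℕ, ℕ × ℕ =>
      seg n c.1 c.2.2.1 (c.2.1 - c.2.2.1) (n - c.2.2.2.1 - c.2.2.2.2, c.2.2.2)) ''
      (codes n : Set _) := by
    ext H
    constructor
    · intro hH
      obtain ⟨s, a, b, ⟨x, y, z⟩, hL, hok, rfl⟩ := exists_seg hH
      have hx : n - y - z = x := by
        have := hL.plane
        simp only [OnPlane] at this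
        omega
      have hb : a + b - a = b := by omega
      refine ⟨⟨s, a + b, a, y, z⟩, ?_, ?_⟩
      · rw [Finset.mem_coe, mem_codes]
        simp only [hx, hb]
        exact ⟨by have := hL.pos; omega, hL, hok⟩
      · simp only [hx, hb]
    · rintro ⟨c, hc, rfl⟩
      obtain ⟨ha, hL, hok⟩ := mem_codes.mp hc
      refine seg_mem_goodSegments hn hL fun h => ?_
      rw [Nat.add_sub_cancel' ha.le]
      exact hok h
  rw [himg, Set.InjOn.ncard_image, Set.ncard_coe_finset]
  rintro ⟨s, j, a, p⟩ hc ⟨s', j', a', p'⟩ hc' h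
  obtain ⟨ha, hL, hok⟩ := mem_codes.mp hc
  obtain ⟨ha', hL', -⟩ := mem_codes.mp hc'
  simp only at ha hL hok ha' hL' h
  obtain ⟨rfl, rfl, hb, hE⟩ := seg_injective hn hL
    (fun h => by rw [Nat.add_sub_cancel' ha.le]; exact hok h) hL' h
  obtain rfl : j = j' := by omega
  obtain rfl : p = p' := congrArg Prod.snd hE
  rfl

theorem stmt_11 (n : ℕ) (hn : 3 ≤ n) :
    (((goodSegments n).ncard : ℚ) =
      (alphafun (n + 1) : ℚ) - ∑ i ∈ Finset.Icc 2 n, (Nat.totient i : ℚ) -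
        2 * ∑ i ∈ Finset.Icc (n / 2 + 1) n, (Nat.totient i : ℚ) - 2) ∧
    ((1 : ℚ) + ((Tprime n).ncard : ℚ) + ((goodSegments n).ncard : ℚ) =
      (1 / 2 : ℚ) * ((n : ℚ) - 1) * ((n : ℚ) + 4) + (alphafun (n + 1) : ℚ) -
        ∑ i ∈ Finset.Icc 2 n, (Nat.totient i : ℚ) -
        2 * ∑ i ∈ Finset.Icc (n / 2 + 1) n, (Nat.totient i : ℚ) - 1) := by
  have h1 : ((goodSegments n).ncard : ℚ) =
      (alphafun (n + 1) : ℚ) - ∑ i ∈ Finset.Icc 2 n, (Nat.totient i : ℚ) -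
        2 * ∑ i ∈ Finset.Icc (n / 2 + 1) n, (Nat.totient i : ℚ) - 2 := by
    rw [ncard_goodSegments hn, card_codes hn]
  refine ⟨h1, ?_⟩
  rw [h1, ncard_Tprime hn]
  ring
end

section
/- Let n ≥ 4, let ℓ ∈ {1,2,3}, let P ∈ Γ_ℓ and Q ∈ Δ_ℓ with P ≠ Q, and let H(P,Q) = {R ∈ T' : R lies on the line in ℤ³ through P and Q}. If H(P,Q) is not equal to any of the three maximal segments L₁ = {(i,j,k) ∈ T' : i = 1}, L₂ = {(i,j,k) ∈ T' : j = 1}, L₃ = {(i,j,k) ∈ T' : k = 1}, then P and Q are the extremes of H(P,Q), i.e., every R ∈ H(P,Q) can be written as R = P + t·(Q − P) with t a rational number satisfying 0 ≤ t ≤ 1. -/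
/-! The parameter of `R` on the line `PQ` is controlled by the `ℓ`-th coordinate, which is at least
`n - 2` at `P` and at most `1` at `Q`. A point of `T'` before `P` on the line has `ℓ`-th coordinate
larger than that of `P`; since the vertices are excluded, this forces `P` to be the interior point
of `Γ_ℓ`, and `R`, `P`, `Q` to share a coordinate equal to `1`. A point beyond `Q` must have `ℓ`-th
coordinate `0`, with `Q` having `ℓ`-th coordinate `1`; a divisibility argument on another coordinate
again shows that `P` and `Q` share a coordinate equal to `1` (`core`). In both cases
the line is one of `L₁, L₂, L₃` (`segment_eq_of_coord_eq_one`), which is excluded. -/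

open scoped BigOperators

/-- The `ℓ`-th coordinate of a point of `ℕ³`. -/
def coord (ℓ : Fin 3) (p : ℕ × ℕ × ℕ) : ℕ := ![p.1, p.2.1, p.2.2] ℓ

/-- The three-element sets `Γ₁, Γ₂, Γ₃`. -/
def Gam (n : ℕ) (ℓ : Fin 3) : Set (ℕ × ℕ × ℕ) :=
  ![({(n - 1, 1, 0), (n - 1, 0, 1), (n - 2, 1, 1)} : Set (ℕ × ℕ × ℕ)),
    ({(0, n - 1, 1), (1, n - 1, 0), (1, n - 2, 1)} : Set (ℕ × ℕ × ℕ)),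
    ({(0, 1, n - 1), (1, 0, n - 1), (1, 1, n - 2)} : Set (ℕ × ℕ × ℕ))] ℓ

/-- The sets `Δ₁, Δ₂, Δ₃`: points of `T'` whose `ℓ`-th coordinate is at most 1. -/
def Delta (n : ℕ) (ℓ : Fin 3) : Set (ℕ × ℕ × ℕ) :=
  {p ∈ Tprime n | coord ℓ p ≤ 1}

/-- The three edge segments `H₁, H₂, H₃` of `T'`. -/
def Edge (n : ℕ) (ℓ : Fin 3) : Set (ℕ × ℕ × ℕ) :=
  {p ∈ Tprime n | coord ℓ p = 0 ∧ ∀ m : Fin 3, m ≠ ℓ → 0 < coord m p}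

/-- `ℋ₂`: the maximal segments of `T'` other than the three edge segments. -/
def Htwo (n : ℕ) : Set (Set (ℕ × ℕ × ℕ)) :=
  {H | IsMaxSegment n H ∧ ∀ ℓ : Fin 3, H ≠ Edge n ℓ}

/-- `ℋ_red`: the elements of `ℋ₂` meeting some `Γ_ℓ` and the corresponding `Δ_ℓ`. -/
def Hred (n : ℕ) : Set (Set (ℕ × ℕ × ℕ)) :=
  {H ∈ Htwo n | ∃ ℓ : Fin 3, (H ∩ Gam n ℓ).Nonempty ∧ (H ∩ Delta n ℓ).Nonempty}

/-- Three points of the grid on the line where the `m`-th coordinate is `1` are collinear. -/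
lemma collinear_of_coord_eq_one {n : ℕ} (m : Fin 3) {P Q R : ℕ × ℕ × ℕ}
    (hPn : P.1 + P.2.1 + P.2.2 = n) (hQn : Q.1 + Q.2.1 + Q.2.2 = n)
    (hRn : R.1 + R.2.1 + R.2.2 = n)
    (hP : coord m P = 1) (hQ : coord m Q = 1) (hR : coord m R = 1) :
    Collinear ℚ {emb P, emb Q, emb R} := by
  obtain ⟨a, b, c⟩ := P
  obtain ⟨a', b', c'⟩ := Q
  obtain ⟨x, y, z⟩ := R
  rw [collinear_iff_of_mem (p₀ := emb (a, b, c)) (by simp)]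
  simp only at hPn hQn hRn
  have hPq : (a + b + c : ℚ) = n := by exact_mod_cast hPn
  have hQq : (a' + b' + c' : ℚ) = n := by exact_mod_cast hQn
  have hRq : (x + y + z : ℚ) = n := by exact_mod_cast hRn
  fin_cases m <;> simp [coord] at hP hQ hR <;> subst hP hQ hR
  · refine ⟨![0, 1, -1], ?_⟩
    simp only [Set.mem_insert_iff, Set.mem_singleton_iff, forall_eq_or_imp, forall_eq]
    refine ⟨⟨0, by simp⟩, ⟨b' - b, ?_⟩, ⟨y - b, ?_⟩⟩ <;>
    · ext i
      fin_cases i <;> simp [emb] <;> (push_cast at *; linarith)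
  · refine ⟨![1, 0, -1], ?_⟩
    simp only [Set.mem_insert_iff, Set.mem_singleton_iff, forall_eq_or_imp, forall_eq]
    refine ⟨⟨0, by simp⟩, ⟨a' - a, ?_⟩, ⟨x - a, ?_⟩⟩ <;>
    · ext i
      fin_cases i <;> simp [emb] <;> (push_cast at *; linarith)
  · refine ⟨![1, -1, 0], ?_⟩
    simp only [Set.mem_insert_iff, Set.mem_singleton_iff, forall_eq_or_imp, forall_eq]
    refine ⟨⟨0, by simp⟩, ⟨a' - a, ?_⟩, ⟨x - a, ?_⟩⟩ <;>
    · ext i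
      fin_cases i <;> simp [emb] <;> (push_cast at *; linarith)

lemma emb_injective : Function.Injective emb := by
  rintro ⟨a, b, c⟩ ⟨a', b', c'⟩ h
  have h0 := congrFun h 0
  have h1 := congrFun h 1
  have h2 := congrFun h 2
  simp [emb] at h0 h1 h2
  simp [h0, h1, h2]

lemma exists_param_of_collinear {P Q R : ℕ × ℕ × ℕ} (hPQ : P ≠ Q)
    (h : Collinear ℚ {emb P, emb Q, emb R}) :
    ∃ t : ℚ, emb R = emb P + t • (emb Q - emb P) := by
  have h1 : emb R ∈ affineSpan ℚ {emb P, emb Q} :=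
    h.mem_affineSpan_of_mem_of_ne (by simp) (by simp) (by simp)
      (fun e => hPQ (emb_injective e))
  obtain ⟨t, ht⟩ := mem_affineSpan_pair_iff_exists_lineMap_eq.1 h1
  refine ⟨t, ?_⟩
  rw [← ht, AffineMap.lineMap_apply]
  simp [add_comm]

lemma emb_apply (m : Fin 3) (P : ℕ × ℕ × ℕ) : emb P m = coord m P := by
  fin_cases m <;> simp [emb, coord]

/-- If `P` and `Q` share an `m`-th coordinate `1`, the maximal segment through them is `L_m`. -/
lemma segment_eq_of_coord_eq_one {n : ℕ} (m : Fin 3) {P Q : ℕ × ℕ × ℕ} (hPQ : P ≠ Q)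
    (hPn : P.1 + P.2.1 + P.2.2 = n) (hQn : Q.1 + Q.2.1 + Q.2.2 = n)
    (hP : coord m P = 1) (hQ : coord m Q = 1) :
    {R ∈ Tprime n | Collinear ℚ {emb P, emb Q, emb R}} = {p ∈ Tprime n | coord m p = 1} := by
  ext R
  simp only [Set.mem_ofPred_eq]
  refine and_congr_right fun hR => ⟨fun h => ?_, fun h => ?_⟩
  · obtain ⟨t, ht⟩ := exists_param_of_collinear hPQ h
    have h1 := congrFun ht m
    simp only [Pi.add_apply, Pi.smul_apply, Pi.sub_apply, emb_apply, hP, hQ] at h1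
    simpa using h1
  · exact collinear_of_coord_eq_one m hPn hQn hR.1 hP hQ h

/-- The arithmetic heart, for integer coordinates with the distinguished one first:
`P = (a, b, c)`, `Q = (a', b', c')`, `R = (x, y, z)`. The vertices `(n, 0, 0)`, `(0, n, 0)` and
`(0, 0, n)` are excluded for `R` through `x, y, z < n`. -/
lemma core {n a b c a' b' c' x y z : ℤ} (hn : 4 ≤ n)
    (hP : (a = n - 1 ∧ b = 1 ∧ c = 0) ∨ (a = n - 1 ∧ b = 0 ∧ c = 1) ∨
      (a = n - 2 ∧ b = 1 ∧ c = 1))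
    (ha' : 0 ≤ a') (hb' : 0 ≤ b') (hc' : 0 ≤ c') (hQn : a' + b' + c' = n) (hQ : a' ≤ 1)
    (hx : 0 ≤ x) (hy : 0 ≤ y) (hz : 0 ≤ z) (hRn : x + y + z = n)
    (hxn : x < n) (hyn : y < n) (hzn : z < n) {t : ℚ}
    (h1 : (x : ℚ) = a + t * (a' - a)) (h2 : (y : ℚ) = b + t * (b' - b))
    (h3 : (z : ℚ) = c + t * (c' - c)) :
    (0 ≤ t ∧ t ≤ 1) ∨ (b = 1 ∧ b' = 1) ∨ (c = 1 ∧ c' = 1) := by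
  have hlt : a' < a := by omega
  have hltq : (a' : ℚ) < a := by exact_mod_cast hlt
  have e1 : (x - a) * (b' - b) = (y - b) * (a' - a) := by
    have : ((x : ℚ) - a) * (b' - b) = (y - b) * (a' - a) := by rw [h1, h2]; ring
    exact_mod_cast this
  have e2 : (x - a) * (c' - c) = (z - c) * (a' - a) := by
    have : ((x : ℚ) - a) * (c' - c) = (z - c) * (a' - a) := by rw [h1, h3]; ring
    exact_mod_cast this
  by_cases t0 : 0 ≤ t
  · by_cases t1 : t ≤ 1
    · exact Or.inl ⟨t0, t1⟩
    · right
      have hxa : x < a' := by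
        have : (x : ℚ) < a' := by nlinarith
        exact_mod_cast this
      obtain rfl : a' = 1 := by omega
      obtain rfl : x = 0 := by omega
      -- In each case `b' - b = (a - 1) * (y - b')` (or the same with `c, c', z`); the bounds on
      -- the coordinates of `Q` and `R` leave few values of the second factor.
      rcases hP with ⟨rfl, rfl, rfl⟩ | ⟨rfl, rfl, rfl⟩ | ⟨rfl, rfl, rfl⟩
      · left
        have key : b' - 1 = (n - 2) * (y - b') := by linarith
        refine ⟨rfl, ?_⟩
        have s1 : y - b' < 2 := by nlinarith
        have s2 : -1 < y - b' := by nlinarith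
        obtain h | h : y - b' = 0 ∨ y - b' = 1 := by omega
        · rw [h] at key; omega
        · rw [h] at key; omega
      · right
        have key : c' - 1 = (n - 2) * (z - c') := by linarith
        refine ⟨rfl, ?_⟩
        have s1 : z - c' < 2 := by nlinarith
        have s2 : -1 < z - c' := by nlinarith
        obtain h | h : z - c' = 0 ∨ z - c' = 1 := by omega
        · rw [h] at key; omega
        · rw [h] at key; omega
      · have key : b' - 1 = (n - 3) * (y - b') := by linarith
        have s1 : y - b' < 3 := by nlinarith
        have s2 : -2 < y - b' := by nlinarith
        obtain h | h | h | h : y - b' = -1 ∨ y - b' = 0 ∨ y - b' = 1 ∨ y - b' = 2 := by omega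
        all_goals rw [h] at key; omega
  · right
    have hxa : a < x := by
      have : (a : ℚ) < x := by nlinarith
      exact_mod_cast this
    rcases hP with ⟨rfl, rfl, rfl⟩ | ⟨rfl, rfl, rfl⟩ | ⟨rfl, rfl, rfl⟩
    · omega
    · omega
    · obtain rfl : x = n - 1 := by omega
      obtain rfl | rfl : y = 1 ∨ z = 1 := by omega
      · left; constructor <;> linarith
      · right; constructor <;> linarith

theorem stmt_12 (n : ℕ) (hn : 4 ≤ n) (ℓ : Fin 3) (P Q : ℕ × ℕ × ℕ)
    (hP : P ∈ Gam n ℓ) (hQ : Q ∈ Delta n ℓ) (hPQ : P ≠ Q)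
    (hL : ∀ m : Fin 3,
      {R ∈ Tprime n | Collinear ℚ {emb P, emb Q, emb R}} ≠
        {p ∈ Tprime n | coord m p = 1}) :
    ∀ R ∈ {R ∈ Tprime n | Collinear ℚ {emb P, emb Q, emb R}},
      ∃ t : ℚ, 0 ≤ t ∧ t ≤ 1 ∧ emb R = emb P + t • (emb Q - emb P) := by
  rintro R ⟨hR, hcol⟩
  obtain ⟨t, ht⟩ := exists_param_of_collinear hPQ hcol
  suffices h : 0 ≤ t ∧ t ≤ 1 from ⟨t, h.1, h.2, ht⟩
  obtain ⟨⟨hQn, -⟩, hQ1⟩ := hQ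
  have hPn : P.1 + P.2.1 + P.2.2 = n := by
    fin_cases ℓ <;> simp [Gam] at hP <;> rcases hP with rfl | rfl | rfl <;> simp <;> omega
  have key : ∀ m, coord m P = 1 → coord m Q = 1 → False := fun m h1 h2 =>
    hL m (segment_eq_of_coord_eq_one m hPQ hPn hQn h1 h2)
  have k0 := key 0
  have k1 := key 1
  have k2 := key 2
  have e0 := congrFun ht 0
  have e1 := congrFun ht 1
  have e2 := congrFun ht 2
  obtain ⟨a, b, c⟩ := P
  obtain ⟨a', b', c'⟩ := Q
  obtain ⟨x, y, z⟩ := R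
  obtain ⟨hRn, hRv⟩ := hR
  simp only [Set.mem_ofPred_eq] at hQn hRn hPn
  have hlt : x < n ∧ y < n ∧ z < n := by
    simp only [Set.mem_insert_iff, Set.mem_singleton_iff, Prod.mk.injEq] at hRv
    omega
  simp [coord] at k0 k1 k2
  simp [emb] at e0 e1 e2
  fin_cases ℓ <;> simp [Gam, coord] at hP hQ1
  · have := core (n := n) (a := a) (b := b) (c := c) (a' := a') (b' := b') (c' := c')
      (x := x) (y := y) (z := z) (t := t) (by omega) (by omega) (by omega) (by omega) (by omega)
      (by omega) (by omega) (by omega) (by omega) (by omega) (by omega) (by omega) (by omega)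
      (by omega) (by exact_mod_cast e0) (by exact_mod_cast e1) (by exact_mod_cast e2)
    rcases this with h | h | h
    · exact h
    · omega
    · omega
  · have := core (n := n) (a := b) (b := a) (c := c) (a' := b') (b' := a') (c' := c')
      (x := y) (y := x) (z := z) (t := t) (by omega) (by omega) (by omega) (by omega) (by omega)
      (by omega) (by omega) (by omega) (by omega) (by omega) (by omega) (by omega) (by omega)
      (by omega) (by exact_mod_cast e1) (by exact_mod_cast e0) (by exact_mod_cast e2)
    rcases this with h | h | h
    · exact h
    · omega
    · omega
  · have := core (n := n) (a := c) (b := a) (c := b) (a' := c') (b' := a') (c' := b')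
      (x := z) (y := x) (z := y) (t := t) (by omega) (by omega) (by omega) (by omega) (by omega)
      (by omega) (by omega) (by omega) (by omega) (by omega) (by omega) (by omega) (by omega)
      (by omega) (by exact_mod_cast e2) (by exact_mod_cast e0) (by exact_mod_cast e1)
    rcases this with h | h | h
    · exact h
    · omega
    · omega
end

section
/- For every integer n ≥ 4, the set ℋ_red has exactly 6(3n − 8) elements. -/
/-!
A maximal segment is the zero set in `T'` of a determinant, and is determined by any two of its
points (`isMaxSegment_tline`, `IsMaxSegment.eq_tline`). So `ℋ_red` is the set of lines `γδ` with
`γ ∈ Γ_ℓ` and `δ ∈ Δ_ℓ`, edges excluded, and the task is to count each of them once.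

Use coordinates `(x, y)` in which the `ℓ`-th vertex is the origin (`chart`). Then `Γ_ℓ` consists of
`(1, 0)`, `(0, 1)`, `(1, 1)`, and `Δ_ℓ` of the points with `x + y = n - r`, `r ∈ {0, 1}`. A line
`γδ` for `ℓ` with `x(δ) ≤ 1` is an edge or belongs also to the index `ℓ + 2`, whereas one with
`x(δ) ≥ 2` misses `Γ_{ℓ+2}` (`not_meet`). Keeping only the lines with `x(δ) ≥ 2`, the three cyclic
families are therefore disjoint, and together they still give all of `ℋ_red` (`surj`).

Within a family two corrections remain: the edge `y = 0` is dropped, and the line `y = 1`, which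
passes through two points of `Γ_ℓ` and meets both rows of `Δ_ℓ`, is counted once. No other line `γδ`
meets both rows, because the heights of the two rows above `γ` are consecutive integers, so coprime
(`cross_diff`), and no other one contains a second point of `Γ_ℓ`. This (`absc`) leaves
`2 (n - 2) + 4 (n - 3) = 2 (3 n - 8)` lines per family (`card_indices`), bijectively
(`lineOf_injOn`).
-/

open scoped BigOperators

/-! ### Segments as zero sets of a determinant -/

/-- Twice the signed area of the triangle `P, Q, R` in the first two coordinates; for points of
`i + j + k = n` it vanishes exactly when the points are collinear. -/
def tdet (P Q R : ℕ × ℕ × ℕ) : ℤ :=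
  ((Q.1 : ℤ) - P.1) * ((R.2.1 : ℤ) - P.2.1) - ((Q.2.1 : ℤ) - P.2.1) * ((R.1 : ℤ) - P.1)

/-- The points of `T'` on the line through `P` and `Q`. -/
def tline (n : ℕ) (P Q : ℕ × ℕ × ℕ) : Set (ℕ × ℕ × ℕ) :=
  {R | R ∈ Tprime n ∧ tdet P Q R = 0}

lemma sum_of_mem {n : ℕ} {P : ℕ × ℕ × ℕ} (h : P ∈ Tprime n) : P.1 + P.2.1 + P.2.2 = n := h.1

lemma left_mem_tline {n : ℕ} {P : ℕ × ℕ × ℕ} (Q : ℕ × ℕ × ℕ) (h : P ∈ Tprime n) :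
    P ∈ tline n P Q := ⟨h, by simp [tdet]⟩

lemma right_mem_tline {n : ℕ} (P : ℕ × ℕ × ℕ) {Q : ℕ × ℕ × ℕ} (h : Q ∈ Tprime n) :
    Q ∈ tline n P Q := ⟨h, by simp only [tdet]; ring⟩

lemma tdet_eq_zero_of_collinear {P Q R : ℕ × ℕ × ℕ}
    (h : Collinear ℚ {emb P, emb Q, emb R}) : tdet P Q R = 0 := by
  rw [collinear_iff_of_mem (p₀ := emb P) (by simp)] at h
  obtain ⟨v, hv⟩ := h
  obtain ⟨a, ha⟩ := hv (emb Q) (by simp)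
  obtain ⟨b, hb⟩ := hv (emb R) (by simp)
  have a0 := congrFun ha 0
  have a1 := congrFun ha 1
  have b0 := congrFun hb 0
  have b1 := congrFun hb 1
  simp [emb] at a0 a1 b0 b1
  have : (tdet P Q R : ℚ) = 0 := by
    simp only [tdet]; push_cast
    rw [a0, a1, b0, b1]; ring
  exact_mod_cast this

lemma fst_ne_or {n : ℕ} {P Q : ℕ × ℕ × ℕ} (hP : P ∈ Tprime n) (hQ : Q ∈ Tprime n)
    (hne : P ≠ Q) : (Q.1 : ℤ) - P.1 ≠ 0 ∨ (Q.2.1 : ℤ) - P.2.1 ≠ 0 := by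
  by_contra! h
  have := sum_of_mem hP
  have := sum_of_mem hQ
  apply hne
  ext <;> omega

/-- The converse of `tdet_eq_zero_of_collinear`, in parametric form. -/
lemma exists_param {n : ℕ} {P Q R : ℕ × ℕ × ℕ} (hP : P ∈ Tprime n) (hQ : Q ∈ Tprime n)
    (hR : R ∈ Tprime n) (hne : P ≠ Q) (h : tdet P Q R = 0) :
    ∃ r : ℚ, emb R = r • (emb Q - emb P) +ᵥ emb P := by
  have sP : (P.1 : ℚ) + P.2.1 + P.2.2 = n := by exact_mod_cast sum_of_mem hP
  have sQ : (Q.1 : ℚ) + Q.2.1 + Q.2.2 = n := by exact_mod_cast sum_of_mem hQ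
  have sR : (R.1 : ℚ) + R.2.1 + R.2.2 = n := by exact_mod_cast sum_of_mem hR
  have hd : (tdet P Q R : ℚ) = 0 := by exact_mod_cast h
  simp only [tdet] at hd
  push_cast at hd
  have key : ∀ r : ℚ, (R.1 : ℚ) = r * (Q.1 - P.1) + P.1 →
      (R.2.1 : ℚ) = r * (Q.2.1 - P.2.1) + P.2.1 → emb R = r • (emb Q - emb P) +ᵥ emb P := by
    intro r h0 h1
    funext i
    fin_cases i
    · simpa [emb] using h0
    · simpa [emb] using h1
    · simp [emb]
      linear_combination sR - r * sQ + (r - 1) * sP - h0 - h1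
  rcases fst_ne_or hP hQ hne with h0 | h0
  · have h0' : (Q.1 : ℚ) - P.1 ≠ 0 := by exact_mod_cast h0
    refine ⟨((R.1 : ℚ) - P.1) / (Q.1 - P.1), key _ ?_ ?_⟩
    · field_simp; ring
    · field_simp; linear_combination hd
  · have h0' : (Q.2.1 : ℚ) - P.2.1 ≠ 0 := by exact_mod_cast h0
    refine ⟨((R.2.1 : ℚ) - P.2.1) / (Q.2.1 - P.2.1), key _ ?_ ?_⟩
    · field_simp; linear_combination -hd
    · field_simp; ring

lemma isMaxSegment_tline {n : ℕ} {P Q : ℕ × ℕ × ℕ} (hP : P ∈ Tprime n) (hQ : Q ∈ Tprime n)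
    (hne : P ≠ Q) : IsMaxSegment n (tline n P Q) := by
  refine ⟨fun R h => h.1, ⟨P, left_mem_tline Q hP, Q, right_mem_tline P hQ, hne⟩, ?_, ?_⟩
  · rw [collinear_iff_of_mem (p₀ := emb P) (Set.mem_image_of_mem emb (left_mem_tline Q hP))]
    refine ⟨emb Q - emb P, ?_⟩
    rintro _ ⟨R, hR, rfl⟩
    exact exists_param hP hQ hR.1 hne hR.2
  · rintro R hR ⟨A, hA, B, hB, hAB, hcol⟩
    refine ⟨hR, ?_⟩
    have h1 := hA.2
    have h2 := hB.2
    have h3 := tdet_eq_zero_of_collinear hcol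
    simp only [tdet] at h1 h2 h3 ⊢
    -- multiplying by a nonzero coordinate of `B - A` reduces the claim to a polynomial identity
    rcases fst_ne_or hA.1 hB.1 hAB with h | h
    · refine (mul_eq_zero.mp ?_).resolve_left h
      linear_combination ((Q.1 : ℤ) - P.1) * h3 + ((R.1 : ℤ) - A.1) * (h2 - h1)
        + ((B.1 : ℤ) - A.1) * h1
    · refine (mul_eq_zero.mp ?_).resolve_left h
      linear_combination ((Q.2.1 : ℤ) - P.2.1) * h3 + ((R.2.1 : ℤ) - A.2.1) * (h2 - h1)
        + ((B.2.1 : ℤ) - A.2.1) * h1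

lemma IsMaxSegment.eq_tline {n : ℕ} {H : Set (ℕ × ℕ × ℕ)} (hH : IsMaxSegment n H)
    {P Q : ℕ × ℕ × ℕ} (hP : P ∈ H) (hQ : Q ∈ H) (hne : P ≠ Q) : H = tline n P Q := by
  obtain ⟨hsub, -, hcol, hmax⟩ := hH
  ext R
  constructor
  · intro hR
    refine ⟨hsub hR, tdet_eq_zero_of_collinear (hcol.subset ?_)⟩
    rintro _ (rfl | rfl | rfl)
    exacts [⟨P, hP, rfl⟩, ⟨Q, hQ, rfl⟩, ⟨R, hR, rfl⟩]
  · rintro ⟨hR, hd⟩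
    refine hmax R hR ⟨P, hP, Q, hQ, hne, ?_⟩
    rw [collinear_iff_of_mem (p₀ := emb P) (by simp)]
    refine ⟨emb Q - emb P, ?_⟩
    rintro _ (rfl | rfl | rfl)
    · exact ⟨0, by simp⟩
    · exact ⟨1, by simp⟩
    · exact exists_param (hsub hP) (hsub hQ) hR hne hd

/-! ### Charts of the triangle -/

/-- The point whose barycentric coordinates, read cyclically from the `ℓ`-th one, are
`(n - x - y, x, y)`; the subtraction is only meaningful for `x + y ≤ n`. -/
def chart (n : ℕ) (ℓ : Fin 3) (p : ℕ × ℕ) : ℕ × ℕ × ℕ :=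
  ![(n - p.1 - p.2, p.1, p.2), (p.2, n - p.1 - p.2, p.1), (p.1, p.2, n - p.1 - p.2)] ℓ

lemma tdet_chart {n : ℕ} (ℓ : Fin 3) {p q r : ℕ × ℕ} (hp : p.1 + p.2 ≤ n) (hq : q.1 + q.2 ≤ n)
    (hr : r.1 + r.2 ≤ n) : tdet (chart n ℓ p) (chart n ℓ q) (chart n ℓ r) =
      ((q.1 : ℤ) - p.1) * ((r.2 : ℤ) - p.2) - ((q.2 : ℤ) - p.2) * ((r.1 : ℤ) - p.1) := by
  have e : ∀ {s : ℕ × ℕ}, s.1 + s.2 ≤ n → ((n - s.1 - s.2 : ℕ) : ℤ) = n - s.1 - s.2 := by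
    intro s hs; omega
  fin_cases ℓ <;> simp [tdet, chart, e hp, e hq, e hr] <;> ring

lemma chart_mem {n : ℕ} (ℓ : Fin 3) {x y : ℕ} (h : x + y ≤ n) (h0 : 0 < x + y) (hx : x < n)
    (hy : y < n) : chart n ℓ (x, y) ∈ Tprime n := by
  fin_cases ℓ <;> simp [chart, Tprime] <;> omega

lemma exists_chart {n : ℕ} (ℓ : Fin 3) {R : ℕ × ℕ × ℕ} (h : R ∈ Tprime n) :
    ∃ x y, x + y ≤ n ∧ 0 < x + y ∧ x < n ∧ y < n ∧ R = chart n ℓ (x, y) := by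
  obtain ⟨i, j, k⟩ := R
  obtain ⟨hs, hv⟩ := h
  simp at hs hv
  fin_cases ℓ
  · refine ⟨j, k, ?_⟩
    simp [chart]
    omega
  · refine ⟨k, i, ?_⟩
    simp [chart]
    omega
  · refine ⟨i, j, ?_⟩
    simp [chart]
    omega

lemma chart_inj {n : ℕ} (ℓ : Fin 3) {p q : ℕ × ℕ} (h : chart n ℓ p = chart n ℓ q) : p = q := by
  obtain ⟨a, b⟩ := p
  obtain ⟨c, d⟩ := q
  fin_cases ℓ <;> simp [chart] at h ⊢ <;> omega

/-- Change of coordinates between two consecutive charts. -/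
lemma chart_rot {n : ℕ} (ℓ : Fin 3) {a b : ℕ} (h : a + b ≤ n) :
    chart n (ℓ + 2) (a, b) = chart n ℓ (b, n - a - b) := by
  fin_cases ℓ <;> simp [chart] <;> omega

/-- The three points of `Γ_ℓ` in the chart at `ℓ`. -/
def gpt (t : Fin 3) : ℕ × ℕ := ![(1, 0), (0, 1), (1, 1)] t

lemma gam_eq {n : ℕ} (ℓ : Fin 3) {R : ℕ × ℕ × ℕ} :
    R ∈ Gam n ℓ ↔ ∃ t, R = chart n ℓ (gpt t) := by
  have e : n - 1 - 1 = n - 2 := by omega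
  fin_cases ℓ <;> simp [Gam, chart, gpt, Fin.exists_fin_succ, e] <;> tauto

/-! ### The index set and its cardinality -/

/-- The admissible abscissae `x` for the lines joining the `t`-th point of `Γ_ℓ` to the point
`(x, n - r - x)` of `Δ_ℓ`, arranged so that each line occurs once. -/
def absc (n : ℕ) (t : Fin 3) (r : Fin 2) : Finset ℕ :=
  ![![Finset.Icc 2 (n - 1), Finset.Icc 2 (n - 2)],
    ![Finset.Icc 2 (n - 1), (Finset.Icc 2 (n - 1)).erase (n - 2)],
    ![Finset.Icc 2 (n - 2), (Finset.Icc 2 (n - 1)).erase (n - 2)]] t r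

/-- Indices `((ℓ, t, r), x)` of the lines of `ℋ_red`. -/
def indices (n : ℕ) : Finset (Σ _ : Fin 3 × Fin 3 × Fin 2, ℕ) :=
  Finset.univ.sigma fun p => absc n p.2.1 p.2.2

/-- The line attached to an index. -/
def lineOf (n : ℕ) (p : Σ _ : Fin 3 × Fin 3 × Fin 2, ℕ) : Set (ℕ × ℕ × ℕ) :=
  tline n (chart n p.1.1 (gpt p.1.2.1)) (chart n p.1.1 (p.2, n - p.1.2.2 - p.2))

lemma card_indices {n : ℕ} (hn : 4 ≤ n) : (indices n).card = 6 * (3 * n - 8) := by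
  simp only [indices, Finset.card_sigma, Fintype.sum_prod_type, Fin.sum_univ_three,
    Fin.sum_univ_two]
  have : ((Finset.Icc 2 (n - 1)).erase (n - 2)).card = n - 3 := by
    rw [Finset.card_erase_of_mem (by simp; omega), Nat.card_Icc]; omega
  simp [absc, this]
  omega

/-- What the proofs use about admissible abscissae, with `y = n - r - x` made explicit. -/
lemma absc_spec {n : ℕ} (hn : 4 ≤ n) {t : Fin 3} {r : Fin 2} {x : ℕ} (h : x ∈ absc n t r) :
    ∃ y, n - r - x = y ∧ x + y + r = n ∧ 2 ≤ x ∧ x < n ∧ y < n ∧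
      (t = 0 → 1 ≤ y) ∧ (t = 1 → r = 1 → y ≠ 1) ∧ (t = 2 → y ≠ 1) ∧ (r = 0 → 1 ≤ y) := by
  refine ⟨_, rfl, ?_⟩
  fin_cases t <;> fin_cases r <;> simp [absc] at h ⊢ <;> omega

lemma gpt_mem {n : ℕ} (hn : 4 ≤ n) (ℓ t : Fin 3) : chart n ℓ (gpt t) ∈ Tprime n := by
  fin_cases t <;> simp only [gpt] <;> refine chart_mem ℓ ?_ ?_ ?_ ?_ <;> omega

lemma gpt_le {n : ℕ} (hn : 4 ≤ n) (t : Fin 3) : (gpt t).1 + (gpt t).2 ≤ n := by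
  fin_cases t <;> simp [gpt]; all_goals omega

lemma gpt_ne {n : ℕ} (ℓ t : Fin 3) {x y : ℕ} (h : 3 ≤ x + y) :
    chart n ℓ (gpt t) ≠ chart n ℓ (x, y) := by
  intro e
  have := chart_inj ℓ e
  fin_cases t <;> simp [gpt] at this <;> omega

/-! ### Injectivity of the indexing -/

/-- A line of the `ℓ`-th family misses `Γ_{ℓ+2}`; this separates the three families. -/
lemma not_meet {n : ℕ} (hn : 4 ≤ n) {ℓ t t' : Fin 3} {r : Fin 2} {x : ℕ} (h : x ∈ absc n t r) :
    chart n (ℓ + 2) (gpt t') ∉ lineOf n ⟨(ℓ, t, r), x⟩ := by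
  rintro ⟨-, hd⟩
  obtain ⟨y, hy, hs, hx, -, -, h0, h1, h2, h3⟩ := absc_spec hn h
  simp only [hy] at hd
  have e : chart n (ℓ + 2) (gpt t') = chart n ℓ ((gpt t').2, n - (gpt t').1 - (gpt t').2) :=
    chart_rot ℓ (gpt_le hn t')
  have hg := gpt_le hn t'
  rw [e, tdet_chart ℓ (gpt_le hn t) (by simp; omega) (by simp; omega)] at hd
  have hr : (r : ℕ) ≤ 1 := by omega
  obtain ⟨z, hz⟩ : ∃ z, n - (gpt t').1 - (gpt t').2 = z := ⟨_, rfl⟩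
  simp only [hz] at hd
  have hz' : n ≤ z + 2 := by fin_cases t' <;> simp [gpt] at hz <;> omega
  have hp : (0 : ℤ) ≤ ((x : ℤ) - 2) * ((z : ℤ) - 1) := mul_nonneg (by omega) (by omega)
  fin_cases t <;> fin_cases t' <;> simp [gpt] at hd h0 h1 h2 hz <;>
    first | omega | (ring_nf at hd hp; omega)

/-- Two points of the same row seen in the same direction coincide. -/
lemma cross_same {a b a' b' : ℤ} (h : a * b' = b * a') (hs : a + b = a' + b') (h0 : 0 < a + b) :
    a = a' := by
  have : (a + b) * (a - a') = 0 := by linear_combination h + a * hs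
  rcases mul_eq_zero.mp this with h | h <;> omega

/-- Points of consecutive rows are never seen in the same direction: with `s = a' + b'` one gets
`s * (a - a') = a'`, which the bounds exclude. -/
lemma cross_diff {a b a' b' : ℤ} (h : a * b' = b * a') (hs : a + b = a' + b' + 1)
    (h0 : 0 < a' + b') (ha : 0 < a') (hb : b' ≠ 0) (hle : a ≤ a' + b' + 1) : False := by
  have e : (a' + b') * (a - a') = a' := by linear_combination h + a' * hs
  have h1 : 0 < a - a' := by
    by_contra! hc
    nlinarith
  rcases eq_or_lt_of_le (show 1 ≤ a - a' by omega) with h2 | h2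
  · rw [← h2] at e; omega
  · nlinarith

/-- Inside one family the indexing is injective: points of `Γ_ℓ` are told apart by linear
conditions, and points of `Δ_ℓ` seen from a common centre by `cross_same` and `cross_diff`. -/
lemma same_chart {n : ℕ} (hn : 4 ≤ n) {ℓ t t' : Fin 3} {r r' : Fin 2} {x x' : ℕ}
    (h : x ∈ absc n t r) (h' : x' ∈ absc n t' r')
    (e : lineOf n ⟨(ℓ, t, r), x⟩ = lineOf n ⟨(ℓ, t', r'), x'⟩) : t = t' ∧ r = r' ∧ x = x' := by
  obtain ⟨y, hy, hs, hx, hxn, hyn, h0, h1, h2, h3⟩ := absc_spec hn h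
  obtain ⟨y', hy', hs', hx', hxn', hyn', h0', h1', h2', h3'⟩ := absc_spec hn h'
  simp only [lineOf, hy, hy'] at e
  have m : chart n ℓ (x, y) ∈ Tprime n := chart_mem ℓ (by omega) (by omega) hxn hyn
  have m' : chart n ℓ (x', y') ∈ Tprime n := chart_mem ℓ (by omega) (by omega) hxn' hyn'
  have e1 := (e ▸ left_mem_tline _ (gpt_mem hn ℓ t') :
    chart n ℓ (gpt t') ∈ tline n (chart n ℓ (gpt t)) (chart n ℓ (x, y))).2
  have e2 := (e ▸ right_mem_tline _ m' :
    chart n ℓ (x', y') ∈ tline n (chart n ℓ (gpt t)) (chart n ℓ (x, y))).2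
  have e3 := (e ▸ left_mem_tline _ (gpt_mem hn ℓ t) :
    chart n ℓ (gpt t) ∈ tline n (chart n ℓ (gpt t')) (chart n ℓ (x', y'))).2
  have b : x + y ≤ n := by omega
  have b' : x' + y' ≤ n := by omega
  rw [tdet_chart ℓ (gpt_le hn _) b (gpt_le hn _)] at e1
  rw [tdet_chart ℓ (gpt_le hn _) b b'] at e2
  rw [tdet_chart ℓ (gpt_le hn _) b' (gpt_le hn _)] at e3
  have ht : t = t' := by
    fin_cases t <;> fin_cases t' <;> simp [gpt] at e1 e3 h0 h2 h0' h2' ⊢ <;> omega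
  subst ht
  refine ⟨rfl, ?_⟩
  simp only at e2
  have g : ((gpt t).1 : ℤ) ≤ 1 ∧ ((gpt t).2 : ℤ) ≤ 1 ∧ (gpt t).1 + (gpt t).2 ≤ 2 := by
    fin_cases t <;> simp [gpt]
  have key : ∀ r : Fin 2, ∀ x y : ℕ, (t = 0 → 1 ≤ y) → (t = 1 → r = 1 → y ≠ 1) →
      (t = 2 → y ≠ 1) → r = 1 → (y : ℤ) - (gpt t).2 ≠ 0 := by
    intro r x y
    fin_cases t <;> simp [gpt] <;> omega
  have bd : x - ((gpt t).1 : ℤ) ≤ n - (gpt t).1 - (gpt t).2 := by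
    fin_cases t <;> simp [gpt] at h0 ⊢ <;> omega
  have bd' : x' - ((gpt t).1 : ℤ) ≤ n - (gpt t).1 - (gpt t).2 := by
    fin_cases t <;> simp [gpt] at h0' ⊢ <;> omega
  have hr : r = r' := by
    by_contra hne
    rcases (by omega : (r = 0 ∧ r' = 1) ∨ (r = 1 ∧ r' = 0)) with ⟨rfl, rfl⟩ | ⟨rfl, rfl⟩
    · simp at hs hs'
      exact cross_diff (sub_eq_zero.mp e2) (by omega) (by omega) (by omega)
        (key 1 x' y' h0' h1' h2' rfl) (by omega)
    · simp at hs hs'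
      exact cross_diff (a := x' - ((gpt t).1 : ℤ)) (b := y' - ((gpt t).2 : ℤ))
        (a' := x - ((gpt t).1 : ℤ)) (b' := y - ((gpt t).2 : ℤ))
        (by linear_combination -e2) (by omega) (by omega) (by omega)
        (key 1 x y h0 h1 h2 rfl) (by omega)
  subst hr
  refine ⟨rfl, ?_⟩
  have := cross_same (sub_eq_zero.mp e2) (by omega) (by omega)
  omega

lemma lineOf_injOn {n : ℕ} (hn : 4 ≤ n) : Set.InjOn (lineOf n) (indices n) := by
  rintro ⟨⟨ℓ, t, r⟩, x⟩ h ⟨⟨ℓ', t', r'⟩, x'⟩ h' e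
  simp [indices] at h h'
  have hg : ∀ ℓ t r x, chart n ℓ (gpt t) ∈ lineOf n ⟨(ℓ, t, r), x⟩ :=
    fun ℓ t r x => left_mem_tline _ (gpt_mem hn ℓ t)
  have hl : ℓ = ℓ' := by
    by_contra hne
    have : ∀ a b : Fin 3, a ≠ b → b = a + 2 ∨ a = b + 2 := by decide
    rcases this ℓ ℓ' hne with h1 | h1
    · have h2 := hg ℓ' t' r' x'
      rw [← e, h1] at h2
      exact not_meet hn h h2
    · have h2 := hg ℓ t r x
      rw [e, h1] at h2
      exact not_meet hn h' h2
  subst hl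
  obtain ⟨rfl, rfl, rfl⟩ := same_chart hn h h' e
  rfl

/-! ### Image of the indexing -/

/-- A segment with two points of `ℓ`-th coordinate zero is an edge. -/
lemma tline_eq_edge {n : ℕ} {P Q : ℕ × ℕ × ℕ} (ℓ : Fin 3) (hP : P ∈ Tprime n)
    (hQ : Q ∈ Tprime n) (hne : P ≠ Q) (cP : coord ℓ P = 0) (cQ : coord ℓ Q = 0) :
    tline n P Q = Edge n ℓ := by
  have hor := fst_ne_or hP hQ hne
  have sP := sum_of_mem hP
  have sQ := sum_of_mem hQ
  ext R
  have hpos : R ∈ Tprime n → coord ℓ R = 0 → ∀ m : Fin 3, m ≠ ℓ → 0 < coord m R := by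
    obtain ⟨i, j, k⟩ := R
    intro hR h0 m hm
    simp [Tprime] at hR
    fin_cases ℓ <;> fin_cases m <;> simp [coord] at h0 hm ⊢ <;> omega
  have hdet : R ∈ Tprime n → (tdet P Q R = 0 ↔ coord ℓ R = 0) := by
    intro hR
    have sR := sum_of_mem hR
    have hfac : (tdet P Q R = 0) ↔ ((Q.1 : ℤ) - P.1 = 0 ∧ (Q.2.1 : ℤ) - P.2.1 = 0) ∨
        coord ℓ R = 0 := by
      fin_cases ℓ <;> simp [coord] at cP cQ ⊢
      · have : tdet P Q R = - ((Q.2.1 : ℤ) - P.2.1) * R.1 := by simp [tdet, cP, cQ]; try ring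
        rw [this, mul_eq_zero]; omega
      · have : tdet P Q R = ((Q.1 : ℤ) - P.1) * R.2.1 := by simp [tdet, cP, cQ]; try ring
        rw [this, mul_eq_zero]; omega
      · have : tdet P Q R = - ((Q.1 : ℤ) - P.1) * R.2.2 := by
          have a1 : (P.2.1 : ℤ) = n - P.1 := by omega
          have a2 : (Q.2.1 : ℤ) = n - Q.1 := by omega
          have a3 : (R.2.1 : ℤ) = n - R.1 - R.2.2 := by omega
          simp only [tdet, a1, a2, a3]; ring
        rw [this, mul_eq_zero]; omega
    rw [hfac]
    omega
  constructor
  · rintro ⟨hR, hd⟩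
    have := (hdet hR).1 hd
    exact ⟨hR, this, hpos hR this⟩
  · rintro ⟨hR, h0, -⟩
    exact ⟨hR, (hdet hR).2 h0⟩

/-- In the chart at `ℓ`, each coordinate is one of `n - x - y`, `x`, `y`. -/
lemma exists_coord_chart {n : ℕ} (ℓ m : Fin 3) : ∃ f : ℕ × ℕ → ℕ, (∀ p, coord m (chart n ℓ p) = f p)
    ∧ (f = (fun p => n - p.1 - p.2) ∨ f = Prod.fst ∨ f = Prod.snd) := by
  refine ⟨_, fun p => rfl, ?_⟩
  fin_cases ℓ <;> fin_cases m <;> simp [coord, chart]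

lemma lineOf_mem {n : ℕ} (hn : 4 ≤ n) {ℓ t : Fin 3} {r : Fin 2} {x : ℕ} (h : x ∈ absc n t r) :
    lineOf n ⟨(ℓ, t, r), x⟩ ∈ Hred n := by
  obtain ⟨y, hy, hs, hx, hxn, hyn, h0, h1, h2, h3⟩ := absc_spec hn h
  simp only [lineOf, hy]
  have m : chart n ℓ (x, y) ∈ Tprime n := chart_mem ℓ (by omega) (by omega) hxn hyn
  have mg := gpt_mem hn ℓ t
  have hne : chart n ℓ (gpt t) ≠ chart n ℓ (x, y) := gpt_ne ℓ t (by omega)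
  have ml := left_mem_tline (chart n ℓ (x, y)) mg
  have mr := right_mem_tline (chart n ℓ (gpt t)) m
  refine ⟨⟨isMaxSegment_tline mg m hne, fun k hk => ?_⟩, ℓ, ⟨_, ml, (gam_eq ℓ).2 ⟨t, rfl⟩⟩,
    ⟨_, mr, m, ?_⟩⟩
  · have c1 := (hk ▸ ml : _ ∈ Edge n k).2.1
    have c2 := (hk ▸ mr : _ ∈ Edge n k).2.1
    obtain ⟨f, hf, hf'⟩ := exists_coord_chart (n := n) ℓ k
    rw [hf] at c1 c2
    rcases hf' with rfl | rfl | rfl <;> fin_cases t <;> simp [gpt] at c1 c2 h0 <;> omega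
  · have : coord ℓ (chart n ℓ (x, y)) = n - x - y := by fin_cases ℓ <;> simp [coord, chart]
    omega

/-- A maximal segment is an indexed line as soon as it contains the two points defining that
line. -/
lemma mem_image_of {n : ℕ} (hn : 4 ≤ n) {H : Set (ℕ × ℕ × ℕ)} (hH : IsMaxSegment n H) {ℓ t : Fin 3}
    {r : Fin 2} {x y : ℕ} (h : x ∈ absc n t r) (hs : x + y + r = n)
    (hg : chart n ℓ (gpt t) ∈ H) (hd : chart n ℓ (x, y) ∈ H) :
    H ∈ lineOf n '' (indices n) := by
  refine ⟨⟨(ℓ, t, r), x⟩, by simpa [indices] using h, ?_⟩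
  have : n - r - x = y := by omega
  simp only [lineOf, this]
  exact (hH.eq_tline hg hd (gpt_ne ℓ t (by omega))).symm

/-- Every segment of `ℋ_red` is indexed: the exceptions in the definition of the index set are
either edges, repetitions inside the `ℓ`-th family, or lines of the family at `ℓ + 2`. -/
lemma surj {n : ℕ} (hn : 4 ≤ n) {H : Set (ℕ × ℕ × ℕ)} (h : H ∈ Hred n) :
    H ∈ lineOf n '' (indices n) := by
  obtain ⟨⟨hH, hE⟩, ℓ, ⟨P, hP, hPG⟩, ⟨Q, hQ, hQT, hQc⟩⟩ := h
  obtain ⟨t, rfl⟩ := (gam_eq ℓ).1 hPG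
  obtain ⟨x, y, hxy, h0, hxn, hyn, rfl⟩ := exists_chart ℓ hQT
  have hc : coord ℓ (chart n ℓ (x, y)) = n - x - y := by fin_cases ℓ <;> simp [coord, chart]
  rw [hc] at hQc
  have hne : chart n ℓ (gpt t) ≠ chart n ℓ (x, y) := gpt_ne ℓ t (by omega)
  have hl := hH.eq_tline hP hQ hne
  have hed : ∀ m : Fin 3, coord m (chart n ℓ (gpt t)) = 0 → coord m (chart n ℓ (x, y)) = 0 →
      False := fun m h1 h2 =>
    hE m (hl.trans (tline_eq_edge m (gpt_mem hn ℓ t) hQT hne h1 h2))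
  have e0 : coord (ℓ + 1) (chart n ℓ (gpt t)) = (gpt t).1 ∧
      coord (ℓ + 1) (chart n ℓ (x, y)) = x ∧ coord (ℓ + 2) (chart n ℓ (gpt t)) = (gpt t).2 ∧
      coord (ℓ + 2) (chart n ℓ (x, y)) = y := by
    fin_cases ℓ <;> simp [coord, chart]
  obtain ⟨ea, eb, ec, ed⟩ := e0
  have hd1 : ¬ ((gpt t).1 = 0 ∧ x = 0) := fun h => hed (ℓ + 1) (ea.trans h.1) (eb.trans h.2)
  have hd2 : ¬ ((gpt t).2 = 0 ∧ y = 0) := fun h => hed (ℓ + 2) (ec.trans h.1) (ed.trans h.2)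
  have mem : ∀ a b : ℕ, a + b ≤ n → 0 < a + b → a < n → b < n →
      ((x : ℤ) - (gpt t).1) * ((b : ℤ) - (gpt t).2) - ((y : ℤ) - (gpt t).2) * ((a : ℤ) - (gpt t).1)
        = 0 → chart n ℓ (a, b) ∈ H := by
    intro a b h1 h2 h3 h4 h5
    rw [hl]
    refine ⟨chart_mem ℓ h1 h2 h3 h4, ?_⟩
    rw [tdet_chart ℓ (gpt_le hn t) hxy h1]
    exact h5
  -- the same membership criterion, for points given in the chart at `ℓ + 2`
  have mem2 : ∀ a b c : ℕ, a + b + c = n → 0 < a + b → a < n → b < n →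
      ((x : ℤ) - (gpt t).1) * ((c : ℤ) - (gpt t).2) - ((y : ℤ) - (gpt t).2) * ((b : ℤ) - (gpt t).1)
        = 0 → c < n → chart n (ℓ + 2) (a, b) ∈ H := by
    intro a b c h1 h2 h3 h4 h5 h6
    rw [chart_rot ℓ (by omega), show n - a - b = c by omega]
    exact mem b c (by omega) (by omega) h4 h6 h5
  -- `H` is a line of the `ℓ`-th family once it contains the two points defining it
  have fin0 : ∀ t' : Fin 3, ∀ r' : Fin 2, ∀ x' y' : ℕ, x' ∈ absc n t' r' →
      x' + y' + r' = n ∧ y' < n ∧ x' < n →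
      ((x : ℤ) - (gpt t).1) * (((gpt t').2 : ℤ) - (gpt t).2) -
        ((y : ℤ) - (gpt t).2) * (((gpt t').1 : ℤ) - (gpt t).1) = 0 →
      ((x : ℤ) - (gpt t).1) * ((y' : ℤ) - (gpt t).2) -
        ((y : ℤ) - (gpt t).2) * ((x' : ℤ) - (gpt t).1) = 0 → H ∈ lineOf n '' (indices n) := by
    intro t' r' x' y' h1 h2 h3 h4
    have hg : (gpt t').1 ≤ 1 ∧ (gpt t').2 ≤ 1 ∧ 0 < (gpt t').1 + (gpt t').2 := by
      fin_cases t' <;> simp [gpt]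
    exact mem_image_of hn hH h1 h2.1
      (mem (gpt t').1 (gpt t').2 (by omega) (by omega) (by omega) (by omega) h3)
      (mem _ _ (by omega) (by omega) (by omega) (by omega) h4)
  -- likewise for the family at `ℓ + 2`, where `c` is the third coordinate of the point of `Γ`
  have fin2 : ∀ t' : Fin 3, ∀ r' : Fin 2, ∀ x' y' c : ℕ, x' ∈ absc n t' r' →
      x' + y' + r' = n ∧ y' < n ∧ x' < n ∧ (gpt t').1 + (gpt t').2 + c = n →
      ((x : ℤ) - (gpt t).1) * ((c : ℤ) - (gpt t).2) -
        ((y : ℤ) - (gpt t).2) * (((gpt t').2 : ℤ) - (gpt t).1) = 0 →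
      ((x : ℤ) - (gpt t).1) * (((r' : ℕ) : ℤ) - (gpt t).2) -
        ((y : ℤ) - (gpt t).2) * ((y' : ℤ) - (gpt t).1) = 0 → H ∈ lineOf n '' (indices n) := by
    intro t' r' x' y' c h1 h2 h3 h4
    have hg : (gpt t').1 ≤ 1 ∧ (gpt t').2 ≤ 1 ∧ 0 < (gpt t').1 + (gpt t').2 := by
      fin_cases t' <;> simp [gpt]
    exact mem_image_of hn hH h1 h2.1
      (mem2 (gpt t').1 (gpt t').2 c (by omega) (by omega) (by omega) (by omega) h3 (by omega))
      (mem2 _ _ r' (by omega) (by omega) (by omega) (by omega) h4 (by omega))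
  clear mem mem2 hed hl hH hE hP hPG hQ hQT hc hne ea eb ec ed
  obtain ⟨m, rfl⟩ : ∃ m, n = m + 4 := ⟨n - 4, by omega⟩
  have hr : x + y = m + 4 ∨ x + y = m + 3 := by omega
  have ab : ∀ x', x' ∈ absc (m + 4) 0 0 ↔ 2 ≤ x' ∧ x' ≤ m + 3 := by simp [absc]
  have ab' : ∀ x', x' ∈ absc (m + 4) 0 1 ↔ 2 ≤ x' ∧ x' ≤ m + 2 := by simp [absc]
  have ac : ∀ x', x' ∈ absc (m + 4) 1 0 ↔ 2 ≤ x' ∧ x' ≤ m + 3 := by simp [absc]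
  have ac' : ∀ x', x' ∈ absc (m + 4) 1 1 ↔ x' ≠ m + 2 ∧ 2 ≤ x' ∧ x' ≤ m + 3 := by simp [absc]
  have ad : ∀ x', x' ∈ absc (m + 4) 2 0 ↔ 2 ≤ x' ∧ x' ≤ m + 2 := by simp [absc]
  have ad' : ∀ x', x' ∈ absc (m + 4) 2 1 ↔ x' ≠ m + 2 ∧ 2 ≤ x' ∧ x' ≤ m + 3 := by simp [absc]
  by_cases hx : 2 ≤ x
  -- the line `y = 1` passes through `gpt 1` and `gpt 2`; it is indexed with `t = 1` and `r = 0`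
  · by_cases hy : y = 1 ∧ t ≠ 0
    · obtain ⟨rfl, ht⟩ := hy
      refine fin0 1 0 (m + 3) 1 ((ac _).2 (by omega)) (by simp) ?_ ?_ <;>
        fin_cases t <;> simp [gpt] at ht ⊢
    · rcases hr with hr | hr
      · refine fin0 t 0 x y ?_ (by simp; omega) (by ring) (by ring)
        fin_cases t <;> simp at hy ⊢
        · rw [ab]; omega
        · rw [ac]; omega
        · rw [ad]; omega
      · refine fin0 t 1 x y ?_ (by simp; omega) (by ring) (by ring)
        fin_cases t <;> simp [gpt] at hy hd2 ⊢
        · rw [ab']; omega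
        · rw [ac']; omega
        · rw [ad']; omega
  -- for `x ≤ 1` the segment meets `Γ_{ℓ+2}` and is indexed in that family
  · have hx' : x = 0 ∨ x = 1 := by omega
    rcases hx' with rfl | rfl
    -- `(0, n)` is a removed vertex, so `y = n - 1`
    · obtain rfl : y = m + 3 := by omega
      fin_cases t
      · exact fin2 0 0 (m + 3) 1 (m + 3) ((ab _).2 (by omega)) (by simp [gpt]; omega)
          (by simp [gpt]) (by simp [gpt])
      · simp [gpt] at hd1
      · exact fin2 0 1 (m + 2) 1 (m + 3) ((ab' _).2 (by omega)) (by simp [gpt]; omega)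
          (by simp [gpt]) (by simp [gpt])
    · by_cases ht : t = 1
      · subst ht
        rcases hr with hr | hr
        · obtain rfl : y = m + 3 := by omega
          exact fin2 1 1 (m + 3) 0 (m + 3) ((ac' _).2 (by omega)) (by simp [gpt]; omega)
            (by simp [gpt]) (by simp [gpt])
        · obtain rfl : y = m + 2 := by omega
          exact fin2 2 1 (m + 3) 0 (m + 2) ((ad' _).2 (by omega)) (by simp [gpt]; omega)
            (by simp [gpt]) (by simp [gpt])
      · refine fin2 1 0 (m + 3) 1 (m + 3) ((ac _).2 (by omega)) (by simp [gpt]; omega) ?_ ?_ <;>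
          fin_cases t <;> simp [gpt] at ht ⊢

theorem stmt_15 (n : ℕ) (hn : 4 ≤ n) :
    (Hred n).ncard = 6 * (3 * n - 8) := by
  have : Hred n = lineOf n '' (indices n) := by
    apply Set.Subset.antisymm
    · exact fun H h => surj hn h
    · rintro _ ⟨⟨⟨ℓ, t, r⟩, x⟩, h, rfl⟩
      simp [indices] at h
      exact lineOf_mem hn h
  rw [this, (lineOf_injOn hn).ncard_image, Set.ncard_coe_finset, card_indices hn]
end
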